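/- arXiv:0801.0939 — 3 statements merged into one kernel-verified Lean document; each statement's English description precedes it below -/
import Mathlib

section
/- Let P be a convex polytope of dimension d and let 0 ≤ k ≤ d-1. Then every k-dimensional face F of P has at least (k+1)(d-k) neighbors in the graph G_k(P). -/
open Set

/-- A convex polytope in `ℝ^N`: the convex hull of a finite set of points. -/
def IsPolytope {N : ℕ} (P : Set (EuclideanSpace ℝ (Fin N))) : Prop :=
  ∃ S : Set (EuclideanSpace ℝ (Fin N)), S.Finite ∧ P = convexHull ℝ S

/-- The dimension of a subset of `ℝ^N`: the dimension of its affine hull. -/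
noncomputable def sdim {N : ℕ} (P : Set (EuclideanSpace ℝ (Fin N))) : ℕ :=
  Module.finrank ℝ (affineSpan ℝ P).direction

/-- `F` is a face of `P` of dimension `k`: a nonempty exposed subset of `P`
(the set of minimizers over `P` of some linear functional) of dimension `k`. -/
def IsFaceDim {N : ℕ} (P F : Set (EuclideanSpace ℝ (Fin N))) (k : ℕ) : Prop :=
  IsExposed ℝ P F ∧ F.Nonempty ∧ sdim F = k

/-- The graph `G_k(P)` on the `k`-dimensional faces of `P`: two such faces
are adjacent if some `(k+1)`-dimensional face of `P` contains both. -/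
def faceGraph {N : ℕ} (P : Set (EuclideanSpace ℝ (Fin N))) (k : ℕ) :
    SimpleGraph {F : Set (EuclideanSpace ℝ (Fin N)) // IsFaceDim P F k} :=
  SimpleGraph.fromRel (fun F F' => ∃ G, IsFaceDim P G (k + 1) ∧ F.1 ⊆ G ∧ F'.1 ⊆ G)

/-- A graph is `m`-connected if it has at least `m+1` nodes and deleting any set
of at most `m-1` nodes (and incident edges) leaves a connected graph. -/
def MConnected {V : Type*} (G : SimpleGraph V) (m : ℕ) : Prop :=
  m + 1 ≤ Nat.card V ∧
    ∀ S : Set V, S.Finite → S.ncard < m → (G.induce Sᶜ).Connected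


namespace PF
set_option linter.unusedSectionVars false
variable {V : Type*} [AddCommGroup V] [Module ℝ V]

def Fc (S T : Finset V) : Prop :=
  T ⊆ S ∧ ∃ l : V →ₗ[ℝ] ℝ, ∃ c : ℝ, (∀ s ∈ S, l s ≤ c) ∧ ∀ s ∈ S, (s ∈ T ↔ l s = c)

noncomputable def dm (T : Finset V) : ℕ := Module.finrank ℝ (vectorSpan ℝ (T : Set V))

lemma Fc.refl (S : Finset V) : Fc S S :=
  ⟨Finset.Subset.refl _, 0, 0, by simp, by simp⟩

lemma Fc.sub {S T U : Finset V} (hU : Fc S U) (hT : T ⊆ S) (h : U ⊆ T) : Fc T U := by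
  obtain ⟨_, l, c, h1, h2⟩ := hU
  exact ⟨h, l, c, fun s hs => h1 s (hT hs), fun s hs => h2 s (hT hs)⟩

lemma Fc.inter [DecidableEq V] {S T U : Finset V} (hT : Fc S T) (hU : Fc S U) : Fc S (T ∩ U) := by
  obtain ⟨a, l, c, h1, h2⟩ := hT
  obtain ⟨_, l', c', h1', h2'⟩ := hU
  refine ⟨Finset.inter_subset_left.trans a, l + l', c + c', ?_, ?_⟩
  · intro s hs
    simpa using add_le_add (h1 s hs) (h1' s hs)
  · intro s hs
    have := h1 s hs
    have := h1' s hs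
    rw [Finset.mem_inter, h2 s hs, h2' s hs]
    simp only [LinearMap.add_apply]
    constructor
    · rintro ⟨h, h'⟩; rw [h, h']
    · intro h; constructor <;> linarith

lemma Fc.trans {S T U : Finset V} (hT : Fc S T) (hU : Fc T U) : Fc S U := by
  classical
  obtain ⟨a, l, c, h1, h2⟩ := hT
  obtain ⟨a', l', c', h1', h2'⟩ := hU
  -- choose t
  obtain ⟨t, ht⟩ : ∃ t : ℝ, ∀ s ∈ S \ T, (l' s - c') / (c - l s) < t := by
    obtain ⟨t, ht⟩ := ((S \ T).image (fun s => (l' s - c') / (c - l s))).exists_le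
    refine ⟨t + 1, fun s hs => ?_⟩
    have := ht _ (Finset.mem_image_of_mem _ hs)
    linarith
  have key : ∀ s ∈ S, s ∉ T → t * l s + l' s < t * c + c' := by
    intro s hs hsT
    have h3 : l s < c := lt_of_le_of_ne (h1 s hs) (fun h => hsT ((h2 s hs).2 h))
    have := ht s (by simp [hs, hsT])
    rw [div_lt_iff₀ (by linarith)] at this
    linarith
  refine ⟨a'.trans a, t • l + l', t * c + c', ?_, ?_⟩
  · intro s hs
    simp only [LinearMap.add_apply, LinearMap.smul_apply, smul_eq_mul]
    by_cases hsT : s ∈ T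
    · have := (h2 s hs).1 hsT
      have := h1' s hsT
      rw [‹l s = c›]; linarith
    · exact (key s hs hsT).le
  · intro s hs
    simp only [LinearMap.add_apply, LinearMap.smul_apply, smul_eq_mul]
    by_cases hsT : s ∈ T
    · rw [h2' s hsT, (h2 s hs).1 hsT]
      constructor <;> intro h <;> linarith
    · constructor
      · intro h; exact absurd (a' h) hsT
      · intro h; exact absurd h (key s hs hsT).ne

/-- a functional constant on T vanishes on the vector span -/
lemma const_vspan {T : Set V} {l : V →ₗ[ℝ] ℝ} {c : ℝ} (h : ∀ t ∈ T, l t = c) :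
    vectorSpan ℝ T ≤ LinearMap.ker l := by
  rw [vectorSpan_def, Submodule.span_le]
  rintro _ ⟨x, hx, y, hy, rfl⟩
  simp [h x hx, h y hy]

lemma vspan_const {T : Set V} {l : V →ₗ[ℝ] ℝ} (h : vectorSpan ℝ T ≤ LinearMap.ker l)
    {x y : V} (hx : x ∈ T) (hy : y ∈ T) : l x = l y := by
  have := h (vsub_mem_vectorSpan ℝ hx hy)
  simpa [sub_eq_zero] using this

variable [FiniteDimensional ℝ V]

lemma dm_mono {T U : Finset V} (h : T ⊆ U) : dm T ≤ dm U :=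
  Submodule.finrank_mono (vectorSpan_mono ℝ (by exact_mod_cast h))

lemma Fc.eq_of_dm {S T U : Finset V} (hT : Fc S T) (hU : U ⊆ S) (h : T ⊆ U) (hne : T.Nonempty)
    (hd : dm U ≤ dm T) : T = U := by
  obtain ⟨a, l, c, h1, h2⟩ := hT
  refine Finset.Subset.antisymm h fun u hu => ?_
  have hE : vectorSpan ℝ (T : Set V) = vectorSpan ℝ (U : Set V) :=
    Submodule.eq_of_le_of_finrank_le (vectorSpan_mono ℝ (by exact_mod_cast h)) hd
  obtain ⟨t, ht⟩ := hne
  have := const_vspan (T := (T : Set V)) (l := l) (c := c)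
    (fun t ht => (h2 t (a ht)).1 ht)
  rw [hE] at this
  rw [h2 u (hU hu), ← (h2 t (a ht)).1 ht]
  exact vspan_const this hu (h ht)

lemma Fc.dm_lt {S T : Finset V} (hT : Fc S T) (hne : T.Nonempty) (h : T ≠ S) : dm T < dm S := by
  by_contra hc
  exact h (hT.eq_of_dm (Finset.Subset.refl _) hT.1 hne (by omega))

lemma pivot {S T : Finset V} {l g : V →ₗ[ℝ] ℝ} {c c' : ℝ}
    (a : T ⊆ S) (h1 : ∀ s ∈ S, l s ≤ c) (h2 : ∀ s ∈ S, (s ∈ T ↔ l s = c))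
    (hg : ∀ t ∈ T, g t = c') (hs : ∃ s ∈ S, c' < g s) :
    ∃ H : Finset V, ∃ τ : ℝ, Fc S H ∧ T ⊆ H ∧ T ≠ H ∧ 0 < τ ∧
      ∀ s ∈ H, l s + τ * (g s - c') = c := by
  classical
  obtain ⟨s0, hs0, hgs0⟩ := hs
  let A := S.filter (fun s => c' < g s)
  obtain ⟨m, hm, hmin⟩ := A.exists_min_image (fun s => (c - l s) / (g s - c'))
    ⟨s0, by simp [A, hs0, hgs0]⟩
  simp only [A, Finset.mem_filter] at hm hmin
  obtain ⟨hmS, hmg⟩ := hm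
  have hmT : m ∉ T := fun h => by have := hg m h; linarith
  have hlm : l m < c := lt_of_le_of_ne (h1 m hmS) (fun h => hmT ((h2 m hmS).2 h))
  set τ := (c - l m) / (g m - c') with hτ
  have hτ0 : 0 < τ := div_pos (by linarith) (by linarith)
  have hle : ∀ s ∈ S, l s + τ * (g s - c') ≤ c := by
    intro s hs
    by_cases h : c' < g s
    · have := hmin s ⟨hs, h⟩
      rw [le_div_iff₀ (by linarith)] at this
      linarith
    · have := h1 s hs
      have : τ * (g s - c') ≤ 0 := mul_nonpos_of_nonneg_of_nonpos hτ0.le (by linarith)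
      linarith
  refine ⟨S.filter (fun s => l s + τ * (g s - c') = c), τ, ⟨Finset.filter_subset _ _, l + τ • g,
    c + τ * c', ?_, ?_⟩, ?_, ?_, hτ0, ?_⟩
  · intro s hs
    have := hle s hs
    simp only [LinearMap.add_apply, LinearMap.smul_apply, smul_eq_mul]
    linarith
  · intro s hs
    simp only [LinearMap.add_apply, LinearMap.smul_apply, smul_eq_mul, Finset.mem_filter, hs,
      true_and]
    constructor <;> intro h <;> linarith
  · intro t ht
    simp [a ht, (h2 t (a ht)).1 ht, hg t ht]
  · intro h
    apply hmT
    rw [h]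
    simp only [Finset.mem_filter, hmS, true_and]
    have : g m - c' ≠ 0 := by linarith
    rw [hτ]; field_simp; ring
  · intro s hs
    exact (Finset.mem_filter.1 hs).2

lemma exists_dual {A B : Submodule ℝ V} (h : ¬ B ≤ A) : ∃ g : V →ₗ[ℝ] ℝ, A ≤ LinearMap.ker g ∧
    ¬ B ≤ LinearMap.ker g := by
  obtain ⟨x, hx, hxA⟩ := SetLike.not_le_iff_exists.1 h
  obtain ⟨g, hg, hg'⟩ := Submodule.exists_le_ker_of_notMem hxA
  exact ⟨g, hg', fun h => hg (h hx)⟩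

/-- up to sign, a functional vanishing on T but not on S has a positive value. -/
lemma exists_sign {S T : Finset V} {g : V →ₗ[ℝ] ℝ} {t0 : V} (ht : t0 ∈ T)
    (hT : vectorSpan ℝ (T : Set V) ≤ LinearMap.ker g)
    (hS : ¬ vectorSpan ℝ (S : Set V) ≤ LinearMap.ker g) :
    ∃ g' : V →ₗ[ℝ] ℝ, LinearMap.ker g' = LinearMap.ker g ∧ (∀ t ∈ T, g' t = g' t0) ∧
      ∃ s ∈ S, g' t0 < g' s := by
  by_cases h : ∃ s ∈ S, g t0 < g s
  · exact ⟨g, rfl, fun t h => vspan_const hT h ht, h⟩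
  · by_cases h' : ∃ s ∈ S, g s < g t0
    · refine ⟨-g, ?_, fun t h => ?_, ?_⟩
      · ext; simp
      · simp [vspan_const hT h ht]
      · simpa using h'
    · push Not at h h'
      exact absurd (const_vspan (c := g t0) fun s hs => le_antisymm (h s hs) (h' s hs)) hS

open Classical in
noncomputable def ups (S T : Finset V) (k : ℕ) : Finset (Finset V) :=
  S.powerset.filter (fun U => Fc S U ∧ T ⊆ U ∧ dm U = k)

lemma mem_ups {S T U : Finset V} {k : ℕ} : U ∈ ups S T k ↔ Fc S U ∧ T ⊆ U ∧ dm U = k := by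
  classical
  simp only [ups, Finset.mem_filter, Finset.mem_powerset]
  exact ⟨fun h => h.2, fun h => ⟨h.1.1, h⟩⟩

lemma span_ups (n : ℕ) : ∀ (S T : Finset V), S.card ≤ n → Fc S T → T.Nonempty → T ≠ S →
    vectorSpan ℝ (S : Set V) ≤ vectorSpan ℝ (T : Set V) ⊔
      ⨆ U ∈ ups S T (dm T + 1), vectorSpan ℝ (U : Set V) := by
  induction n with
  | zero =>
    intro S T hS hT hne hTS
    have : S = ∅ := by simpa using hS
    subst this
    exact absurd (Finset.subset_empty.1 hT.1) hTS
  | succ n ih =>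
    intro S T hS hT hne hTS
    have hlt := hT.dm_lt hne hTS
    by_cases hd : dm S = dm T + 1
    · refine le_sup_of_le_right ?_
      exact le_iSup₂_of_le S (mem_ups.2 ⟨Fc.refl S, hT.1, hd⟩) le_rfl
    by_contra hcon
    set W := vectorSpan ℝ (T : Set V) ⊔
      ⨆ U ∈ ups S T (dm T + 1), vectorSpan ℝ (U : Set V) with hW
    have hH : ∀ H, Fc S H → T ⊆ H → T ≠ H → H ≠ S → vectorSpan ℝ (H : Set V) ≤ W := by
      intro H hH hTH hne' hHS
      have hc : H.card ≤ n := by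
        have := Finset.card_lt_card (hH.1.ssubset_of_ne hHS)
        omega
      refine (ih H T hc (hT.sub hH.1 hTH) hne hne').trans ?_
      refine sup_le_sup_left ?_ _
      refine iSup₂_le fun U hU => ?_
      have := mem_ups.1 hU
      exact le_iSup₂_of_le (f := fun U (_ : U ∈ ups S T (dm T + 1)) => vectorSpan ℝ (U : Set V))
        U (mem_ups.2 ⟨hH.trans this.1, this.2⟩) le_rfl
    obtain ⟨a, l, c, h1, h2⟩ := id hT
    obtain ⟨t0, ht0⟩ := hne
    have hTW : vectorSpan ℝ (T : Set V) ≤ W := le_sup_left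
    obtain ⟨g₀, hg1, hg2⟩ := exists_dual hcon
    obtain ⟨g, hker, hgT, hgS⟩ := exists_sign ht0 (hTW.trans hg1) hg2
    rw [← hker] at hg1 hg2
    have hlt0 := (h2 t0 (a ht0)).1 ht0
    obtain ⟨H, τ, hHS, hTH, hne1, hτ, hHe⟩ := pivot a h1 h2 hgT hgS
    have hbad : ∀ H, Fc S H → T ⊆ H → T ≠ H → (∀ s ∈ H, g s = g t0 → l s = c) → H = S := by
      intro H hHS hTH hne1 hh
      by_contra hc
      have hk := (hH H hHS hTH hne1 hc).trans hg1
      apply hne1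
      refine Finset.Subset.antisymm hTH fun s hs => ?_
      exact (h2 s (hHS.1 hs)).2 (hh s hs (vspan_const hk hs (hTH ht0)))
    have : H = S := hbad H hHS hTH hne1 (by
      intro s hs hgs
      have := hHe s hs
      rw [hgs] at this; linarith)
    subst this
    -- now choose another functional
    have hB : ¬ vectorSpan ℝ (H : Set V) ⊓ LinearMap.ker l ≤ vectorSpan ℝ (T : Set V) := by
      intro hle
      have e1 := Submodule.finrank_mono hle
      have e2 := Submodule.finrank_sup_add_finrank_inf_eq (vectorSpan ℝ (H : Set V))
        (LinearMap.ker l)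
      have e3 := Submodule.finrank_le (vectorSpan ℝ (H : Set V) ⊔ LinearMap.ker l)
      have e4 := LinearMap.finrank_range_add_finrank_ker l
      have e5 := Submodule.finrank_le (LinearMap.range l)
      rw [Module.finrank_self] at e5
      unfold dm at hlt hd
      omega
    obtain ⟨f₀, hf1, hf2⟩ := exists_dual hB
    obtain ⟨f, hker', hfT, hfS⟩ := exists_sign (S := H) ht0 hf1 (fun h => hf2 (inf_le_left.trans h))
    rw [← hker'] at hf1 hf2
    obtain ⟨K, σ, hKS, hTK, hne2, hσ, hKe⟩ := pivot a h1 h2 hfT hfS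
    have : K = H := hbad K hKS hTK hne2 (by
      intro s hs hgs
      have := hHe s (hKS.1 hs)
      rw [hgs] at this; linarith)
    subst this
    apply hf2
    have : vectorSpan ℝ (K : Set V) ≤ LinearMap.ker (l + σ • f) := by
      refine const_vspan (c := c + σ * f t0) ?_
      intro s hs
      have := hKe s hs
      simp only [LinearMap.add_apply, LinearMap.smul_apply, smul_eq_mul]
      linarith
    rintro x ⟨hx, hx'⟩
    have := this hx
    simp only [SetLike.mem_coe, LinearMap.mem_ker] at this hx' ⊢
    simp only [LinearMap.add_apply, LinearMap.smul_apply, smul_eq_mul, hx', zero_add] at this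
    rcases mul_eq_zero.1 this with h | h
    · linarith
    · exact h


lemma card_ups {S T : Finset V} (hT : Fc S T) (hne : T.Nonempty) (hTS : T ≠ S) :
    dm S ≤ dm T + (ups S T (dm T + 1)).card := by
  classical
  have h := span_ups S.card S T le_rfl hT hne hTS
  obtain ⟨a, l, c, h1, h2⟩ := id hT
  obtain ⟨t0, ht0⟩ := hne
  have hlt0 := (h2 t0 (a ht0)).1 ht0
  have hx : ∀ U ∈ ups S T (dm T + 1), ∃ x : V,
      vectorSpan ℝ (U : Set V) ≤ vectorSpan ℝ (T : Set V) ⊔ Submodule.span ℝ {x} := by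
    intro U hU
    obtain ⟨hU1, hU2, hU3⟩ := mem_ups.1 hU
    have hne : T ≠ U := by rintro rfl; omega
    obtain ⟨u, hu, huT⟩ := Finset.exists_of_ssubset (hU2.ssubset_of_ne hne)
    have hle : vectorSpan ℝ (T : Set V) ⊔ Submodule.span ℝ {u - t0} ≤ vectorSpan ℝ (U : Set V) := by
      refine sup_le (vectorSpan_mono ℝ (by exact_mod_cast hU2)) ?_
      rw [Submodule.span_singleton_le_iff_mem]
      exact vsub_mem_vectorSpan ℝ (by exact_mod_cast hu) (by exact_mod_cast hU2 ht0)
    refine ⟨u - t0, (Submodule.eq_of_le_of_finrank_le hle ?_).ge⟩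
    have hlt : vectorSpan ℝ (T : Set V) < vectorSpan ℝ (T : Set V) ⊔ Submodule.span ℝ {u - t0} := by
      refine lt_of_le_of_ne le_sup_left fun he => huT ?_
      have hm : u - t0 ∈ vectorSpan ℝ (T : Set V) := by
        rw [he]
        exact Submodule.mem_sup_right (Submodule.mem_span_singleton_self _)
      have := const_vspan (T := (T : Set V)) (l := l) (c := c)
        (fun t ht => (h2 t (a ht)).1 ht) hm
      rw [LinearMap.mem_ker, map_sub, sub_eq_zero] at this
      rw [h2 u (hU1.1 hu), this, hlt0]
    have := Submodule.finrank_lt_finrank_of_lt hlt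
    unfold dm at hU3
    omega
  choose! x hx using hx
  have h' : vectorSpan ℝ (S : Set V) ≤ vectorSpan ℝ (T : Set V) ⊔
      Submodule.span ℝ (((ups S T (dm T + 1)).image x : Finset V) : Set V) := by
    refine h.trans (sup_le le_sup_left (iSup₂_le fun U hU => (hx U hU).trans ?_))
    refine sup_le_sup_left (Submodule.span_mono ?_) _
    simp only [Set.singleton_subset_iff, Finset.coe_image]
    exact Set.mem_image_of_mem x (by exact_mod_cast hU)
  have e1 := Submodule.finrank_mono h'
  have e2 := Submodule.finrank_add_le_finrank_add_finrank (vectorSpan ℝ (T : Set V))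
    (Submodule.span ℝ (((ups S T (dm T + 1)).image x : Finset V) : Set V))
  have e3 := finrank_span_finset_le_card (R := ℝ) ((ups S T (dm T + 1)).image x)
  have e4 := Finset.card_image_le (s := ups S T (dm T + 1)) (f := x)
  unfold dm at *
  simp only [Set.finrank] at e3
  omega

open Classical in
noncomputable def fcs (S : Finset V) (k : ℕ) : Finset (Finset V) :=
  S.powerset.filter (fun U => Fc S U ∧ U.Nonempty ∧ dm U = k)

lemma mem_fcs {S U : Finset V} {k : ℕ} : U ∈ fcs S k ↔ Fc S U ∧ U.Nonempty ∧ dm U = k := by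
  classical
  simp only [fcs, Finset.mem_filter, Finset.mem_powerset]
  exact ⟨fun h => h.2, fun h => ⟨h.1.1, h⟩⟩

/-- a set of positive dimension has two disjoint proper faces -/
lemma exists_two {S : Finset V} (hS : 0 < dm S) : ∃ A B, Fc S A ∧ Fc S B ∧ A.Nonempty ∧
    B.Nonempty ∧ A ≠ S ∧ B ≠ S ∧ A ≠ B := by
  classical
  have hb : ¬ vectorSpan ℝ (S : Set V) ≤ ⊥ := by
    intro h
    rw [le_bot_iff] at h
    rw [dm, h, finrank_bot] at hS
    exact lt_irrefl _ hS
  obtain ⟨g, -, hg⟩ := exists_dual hb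
  have hne : S.Nonempty := by
    by_contra h
    rw [Finset.not_nonempty_iff_eq_empty] at h
    apply hb
    rw [h]
    simp
  obtain ⟨p, hp, hpm⟩ := S.exists_max_image g hne
  obtain ⟨q, hq, hqm⟩ := S.exists_min_image g hne
  have hlt : g q ≠ g p := by
    intro h
    exact hg (const_vspan (c := g p) fun s hs => le_antisymm (hpm s hs) (h ▸ hqm s hs))
  refine ⟨S.filter (fun s => g s = g p), S.filter (fun s => g s = g q),
    ⟨Finset.filter_subset _ _, g, g p, hpm, fun s hs => by simp [hs]⟩,
    ⟨Finset.filter_subset _ _, -g, - g q, fun s hs => by simpa using hqm s hs,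
      fun s hs => by simp [hs]⟩, ⟨p, by simp [hp]⟩, ⟨q, by simp [hq]⟩, ?_, ?_, ?_⟩
  · intro h
    rw [← h] at hq
    exact hlt (Finset.mem_filter.1 hq).2
  · intro h
    rw [← h] at hp
    exact hlt (Finset.mem_filter.1 hp).2.symm
  · intro h
    have : p ∈ S.filter (fun s => g s = g q) := by rw [← h]; simp [hp]
    exact hlt (Finset.mem_filter.1 this).2.symm

lemma exists_facet {S : Finset V} {n : ℕ} (hS : dm S = n + 1) : (fcs S n).Nonempty := by
  obtain ⟨A, -, hA, -, hne, -, hAS, -⟩ := exists_two (S := S) (by omega)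
  have hlt := hA.dm_lt hne hAS
  have : ∀ k, dm A ≤ k → k ≤ n → (fcs S k).Nonempty := by
    intro k hk
    induction k, hk using Nat.le_induction with
    | base => intro _; exact ⟨A, mem_fcs.2 ⟨hA, hne, rfl⟩⟩
    | succ k hk ih =>
      intro hkn
      obtain ⟨B, hB⟩ := ih (by omega)
      obtain ⟨hB1, hB2, hB3⟩ := mem_fcs.1 hB
      have := card_ups hB1 hB2 (by rintro rfl; omega)
      obtain ⟨U, hU⟩ := Finset.card_pos.1 (show 0 < (ups S B (dm B + 1)).card by omega)
      obtain ⟨hU1, hU2, hU3⟩ := mem_ups.1 hU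
      exact ⟨U, mem_fcs.2 ⟨hU1, hB2.mono hU2, by omega⟩⟩
  exact this n (by omega) le_rfl

lemma card_facets (n : ℕ) : ∀ S : Finset V, dm S = n + 1 → n + 2 ≤ (fcs S n).card := by
  classical
  induction n with
  | zero =>
    intro S hS
    obtain ⟨A, B, hA, hB, hA1, hB1, hAS, hBS, hAB⟩ := exists_two (S := S) (by omega)
    have := hA.dm_lt hA1 hAS
    have := hB.dm_lt hB1 hBS
    rw [zero_add, ← Finset.card_pair hAB]
    refine Finset.card_le_card ?_
    intro X hX
    simp only [Finset.mem_insert, Finset.mem_singleton] at hX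
    rcases hX with rfl | rfl
    · exact mem_fcs.2 ⟨hA, hA1, by omega⟩
    · exact mem_fcs.2 ⟨hB, hB1, by omega⟩
  | succ n ih =>
    intro S hS
    obtain ⟨F, hF⟩ := exists_facet hS
    obtain ⟨hF1, hF2, hF3⟩ := mem_fcs.1 hF
    have hR := ih F hF3
    have hphi : ∀ R ∈ fcs F n, ∃ U, Fc S U ∧ R ⊆ U ∧ dm U = n + 1 ∧ U ≠ F := by
      intro R hR
      obtain ⟨hR1, hR2, hR3⟩ := mem_fcs.1 hR
      have hRS := hF1.trans hR1
      have := card_ups hRS hR2 (by rintro rfl; omega)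
      obtain ⟨U, hU, hne⟩ := Finset.exists_mem_ne (show 1 < (ups S R (dm R + 1)).card by omega) F
      obtain ⟨hU1, hU2, hU3⟩ := mem_ups.1 hU
      exact ⟨U, hU1, hU2, by omega, hne⟩
    choose! φ hφ using hphi
    have hRe : ∀ R ∈ fcs F n, R = F ∩ φ R := by
      intro R hR
      obtain ⟨hR1, hR2, hR3⟩ := mem_fcs.1 hR
      obtain ⟨a, b, c, e⟩ := hφ R hR
      have hsub : R ⊆ F ∩ φ R := Finset.subset_inter hR1.1 b
      have hI := hF1.inter a
      have hIF : Fc F (F ∩ φ R) := hI.sub hF1.1 Finset.inter_subset_left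
      have hne : F ∩ φ R ≠ F := by
        intro h
        have h' : F ⊆ φ R := Finset.inter_eq_left.1 h
        exact e (hF1.eq_of_dm a.1 h' hF2 (by omega)).symm
      have := hIF.dm_lt (hR2.mono hsub) hne
      exact hR1.eq_of_dm hIF.1 hsub hR2 (by omega)
    have hinj : Set.InjOn φ (fcs F n : Set (Finset V)) := by
      intro R hR R' hR' h
      rw [hRe R hR, hRe R' hR', h]
    have hnot : F ∉ (fcs F n).image φ := by
      intro h
      obtain ⟨R, hR, h⟩ := Finset.mem_image.1 h
      exact (hφ R hR).2.2.2 h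
    have hcard := Finset.card_insert_of_notMem hnot
    rw [Finset.card_image_of_injOn hinj] at hcard
    have : insert F ((fcs F n).image φ) ⊆ fcs S (n + 1) := by
      intro X hX
      rcases Finset.mem_insert.1 hX with rfl | hX
      · exact hF
      · obtain ⟨R, hR, rfl⟩ := Finset.mem_image.1 hX
        obtain ⟨a, b, c, e⟩ := hφ R hR
        exact mem_fcs.2 ⟨a, (mem_fcs.1 hR).2.1.mono b, c⟩
    have := Finset.card_le_card this
    omega

open Classical in
noncomputable def nbs (S T : Finset V) : Finset (Finset V) :=
  (ups S T (dm T + 1)).biUnion (fun G => (fcs G (dm T)).erase T)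

lemma mem_nbs {S T U : Finset V} (h : U ∈ nbs S T) : Fc S U ∧ U.Nonempty ∧ dm U = dm T ∧ U ≠ T ∧
    ∃ G, Fc S G ∧ T ⊆ G ∧ U ⊆ G ∧ dm G = dm T + 1 := by
  classical
  simp only [nbs, Finset.mem_biUnion, Finset.mem_erase] at h
  obtain ⟨G, hG, hne, hU⟩ := h
  obtain ⟨a, b, c⟩ := mem_ups.1 hG
  obtain ⟨a', b', c'⟩ := mem_fcs.1 hU
  exact ⟨a.trans a', b', c', hne, G, a, b, a'.1, c⟩

lemma card_nbs {S T : Finset V} (hT : Fc S T) (hne : T.Nonempty) (hTS : T ≠ S) :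
    (dm T + 1) * (dm S - dm T) ≤ (nbs S T).card := by
  classical
  rw [nbs, Finset.card_biUnion]
  · have h1 : ∀ G ∈ ups S T (dm T + 1), dm T + 1 ≤ ((fcs G (dm T)).erase T).card := by
      intro G hG
      obtain ⟨a, b, c⟩ := mem_ups.1 hG
      have := card_facets _ G c
      have := Finset.pred_card_le_card_erase (s := fcs G (dm T)) (a := T)
      omega
    have h2 := Finset.card_nsmul_le_sum _ _ _ h1
    have h3 := card_ups hT hne hTS
    refine le_trans ?_ h2
    rw [smul_eq_mul, mul_comm]
    exact Nat.mul_le_mul_right _ (by omega)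
  · intro G hG G' hG' hGG
    obtain ⟨a, b, c⟩ := mem_ups.1 hG
    obtain ⟨a', b', c'⟩ := mem_ups.1 hG'
    rw [Function.onFun, Finset.disjoint_left]
    intro U hU hU'
    obtain ⟨hUT, hU⟩ := Finset.mem_erase.1 hU
    obtain ⟨-, hU'⟩ := Finset.mem_erase.1 hU'
    obtain ⟨u1, u2, u3⟩ := mem_fcs.1 hU
    obtain ⟨u1', -, -⟩ := mem_fcs.1 hU'
    have hI := a.inter a'
    have hTI : T ⊆ G ∩ G' := Finset.subset_inter b b'
    have hUI : U ⊆ G ∩ G' := Finset.subset_inter u1.1 u1'.1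
    have hTne : T ≠ G ∩ G' := by
      intro h
      rw [← h] at hUI
      exact hUT ((a.trans u1).eq_of_dm hT.1 hUI u2 (by omega))
    have := (hT.sub hI.1 hTI).dm_lt hne hTne
    have e1 := hI.eq_of_dm a.1 Finset.inter_subset_left (hne.mono hTI) (by omega)
    have e2 := hI.eq_of_dm a'.1 Finset.inter_subset_right (hne.mono hTI) (by omega)
    exact hGG (e1.symm.trans e2)

end PF

namespace PF

variable {N : ℕ}

lemma face_hull {V : Type*} [AddCommGroup V] [Module ℝ V] {S T : Finset V} {l : V →ₗ[ℝ] ℝ} {c : ℝ}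
    (a : T ⊆ S) (h1 : ∀ s ∈ S, l s ≤ c) (h2 : ∀ s ∈ S, (s ∈ T ↔ l s = c)) :
    (∀ x ∈ convexHull ℝ (S : Set V), l x ≤ c) ∧
    convexHull ℝ (T : Set V) = {x ∈ convexHull ℝ (S : Set V) | l x = c} := by
  have hA : Convex ℝ {x : V | l x ≤ c ∧ (l x = c → x ∈ convexHull ℝ (T : Set V))} := by
    rw [convex_iff_forall_pos]
    rintro x ⟨hx, hx'⟩ y ⟨hy, hy'⟩ p q hp hq hpq
    have e : l (p • x + q • y) = p * l x + q * l y := by simp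
    have ec : c = p * c + q * c := by rw [← add_mul, hpq, one_mul]
    have i1 := mul_le_mul_of_nonneg_left hx hp.le
    have i2 := mul_le_mul_of_nonneg_left hy hq.le
    refine ⟨by rw [e]; linarith, fun h => ?_⟩
    rw [e] at h
    have hx2 : l x = c := mul_left_cancel₀ hp.ne' (by linarith)
    have hy2 : l y = c := mul_left_cancel₀ hq.ne' (by linarith)
    exact convex_convexHull ℝ _ (hx' hx2) (hy' hy2) hp.le hq.le hpq
  have hsub : convexHull ℝ (S : Set V) ⊆
      {x : V | l x ≤ c ∧ (l x = c → x ∈ convexHull ℝ (T : Set V))} := by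
    refine convexHull_min (fun s hs => ⟨h1 s hs, fun h => subset_convexHull ℝ _ ?_⟩) hA
    exact_mod_cast (h2 s hs).2 h
  refine ⟨fun x hx => (hsub hx).1, Set.Subset.antisymm ?_ fun x hx => (hsub hx.1).2 hx.2⟩
  intro x hx
  refine ⟨convexHull_mono (by exact_mod_cast a) hx, ?_⟩
  have hB : Convex ℝ {x : V | l x = c} := convex_hyperplane l.isLinear c
  exact convexHull_min (fun t ht => (h2 t (a ht)).1 ht) hB hx

lemma isExposed_hull {S T : Finset (EuclideanSpace ℝ (Fin N))} (h : Fc S T) (hne : T.Nonempty) :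
    IsExposed ℝ (convexHull ℝ (S : Set (EuclideanSpace ℝ (Fin N)))) (convexHull ℝ (T : Set _)) := by
  obtain ⟨a, l, c, h1, h2⟩ := h
  obtain ⟨i1, i2⟩ := face_hull a h1 h2
  obtain ⟨t, ht⟩ := hne
  intro _
  refine ⟨LinearMap.toContinuousLinearMap l, ?_⟩
  rw [i2]
  ext x
  simp only [Set.mem_setOf_eq, LinearMap.coe_toContinuousLinearMap']
  refine and_congr_right fun hx => ⟨fun h y hy => h ▸ i1 y hy, fun h => ?_⟩
  refine le_antisymm (i1 x hx) ?_
  rw [← (h2 t (a ht)).1 ht]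
  exact h t (subset_convexHull ℝ _ (by exact_mod_cast a ht))

lemma exists_of_isExposed {S : Finset (EuclideanSpace ℝ (Fin N))}
    {F : Set (EuclideanSpace ℝ (Fin N))}
    (h : IsExposed ℝ (convexHull ℝ (S : Set (EuclideanSpace ℝ (Fin N)))) F) (hne : F.Nonempty) :
    ∃ T, Fc S T ∧ T.Nonempty ∧ F = convexHull ℝ (T : Set _) := by
  classical
  obtain ⟨l, hl⟩ := h hne
  obtain ⟨x0, hx0⟩ := id hne
  rw [hl] at hx0
  obtain ⟨hx1, hx2⟩ := hx0
  have h1 : ∀ s ∈ S, (l : _ →ₗ[ℝ] ℝ) s ≤ l x0 := fun s hs =>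
    hx2 s (subset_convexHull ℝ _ (by exact_mod_cast hs))
  have h2 : ∀ s ∈ S, (s ∈ S.filter (fun s => l s = l x0) ↔ (l : _ →ₗ[ℝ] ℝ) s = l x0) := by
    intro s hs; simp [hs]
  have a : S.filter (fun s => l s = l x0) ⊆ S := Finset.filter_subset _ _
  obtain ⟨i1, i2⟩ := face_hull a h1 h2
  have hF : F = convexHull ℝ ((S.filter (fun s => l s = l x0) : Finset _) : Set _) := by
    rw [i2, hl]
    ext x
    simp only [Set.mem_setOf_eq]
    refine and_congr_right fun hx => ⟨fun h => le_antisymm (hx2 x hx) (h x0 hx1), fun h y hy => ?_⟩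
    have h' : l x = l x0 := h
    rw [h']
    exact hx2 y hy
  refine ⟨_, ⟨a, l, l x0, h1, h2⟩, ?_, hF⟩
  rw [hF, convexHull_nonempty_iff] at hne
  exact_mod_cast hne

lemma hull_inj {S T U : Finset (EuclideanSpace ℝ (Fin N))} (hT : Fc S T) (hU : Fc S U)
    (h : convexHull ℝ (T : Set (EuclideanSpace ℝ (Fin N))) = convexHull ℝ (U : Set _)) : T = U := by
  have key : ∀ {T : Finset (EuclideanSpace ℝ (Fin N))}, Fc S T →
      ∀ s, s ∈ T ↔ s ∈ S ∧ s ∈ convexHull ℝ (T : Set (EuclideanSpace ℝ (Fin N))) := by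
    intro T hT s
    obtain ⟨a, l, c, h1, h2⟩ := hT
    obtain ⟨i1, i2⟩ := face_hull a h1 h2
    refine ⟨fun hs => ⟨a hs, subset_convexHull ℝ _ (by exact_mod_cast hs)⟩, fun hs => ?_⟩
    rw [i2] at hs
    exact (h2 s hs.1).2 hs.2.2
  ext s
  rw [key hT, key hU, h]

lemma sdim_hull (T : Finset (EuclideanSpace ℝ (Fin N))) :
    sdim (convexHull ℝ (T : Set (EuclideanSpace ℝ (Fin N)))) = dm T := by
  rw [sdim, affineSpan_convexHull, direction_affineSpan, dm]

lemma isFaceDim_hull {S T : Finset (EuclideanSpace ℝ (Fin N))} (h : Fc S T) (hne : T.Nonempty) :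
    IsFaceDim (convexHull ℝ (S : Set (EuclideanSpace ℝ (Fin N)))) (convexHull ℝ (T : Set _))
      (dm T) :=
  ⟨isExposed_hull h hne, by rw [convexHull_nonempty_iff]; exact_mod_cast hne, sdim_hull T⟩

end PF

/-- Every `k`-dimensional face `F` of a `d`-dimensional convex polytope `P`
(`0 ≤ k ≤ d-1`) has at least `(k+1)(d-k)` neighbors in the graph `G_k(P)`. -/
theorem stmt_6 (d k : ℕ) (hk : k < d) {N : ℕ}
    (P : Set (EuclideanSpace ℝ (Fin N))) (hP : IsPolytope P) (hdim : sdim P = d)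
    (F : Set (EuclideanSpace ℝ (Fin N))) (hF : IsFaceDim P F k) :
    (k + 1) * (d - k) ≤ ((faceGraph P k).neighborSet ⟨F, hF⟩).ncard := by
  obtain ⟨S', hS', rfl⟩ := hP
  obtain ⟨S, rfl⟩ := hS'.exists_finset_coe
  obtain ⟨T, hT, hTne, rfl⟩ := PF.exists_of_isExposed hF.1 hF.2.1
  have hk' : PF.dm T = k := by rw [← PF.sdim_hull]; exact hF.2.2
  rw [PF.sdim_hull] at hdim
  subst hk' hdim
  have hTS : T ≠ S := by rintro rfl; exact lt_irrefl _ hk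
  refine (PF.card_nbs hT hTne hTS).trans ?_
  rw [← Set.ncard_image_of_injective _ Subtype.val_injective]
  have hinj : Set.InjOn (fun U : Finset (EuclideanSpace ℝ (Fin N)) =>
      convexHull ℝ (U : Set (EuclideanSpace ℝ (Fin N)))) (PF.nbs S T : Set (Finset _)) := by
    intro U hU U' hU' h
    exact PF.hull_inj (PF.mem_nbs hU).1 (PF.mem_nbs hU').1 h
  rw [← Set.ncard_coe_finset, ← Set.ncard_image_of_injOn hinj]
  refine Set.ncard_le_ncard ?_ ?_
  · rintro _ ⟨U, hU, rfl⟩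
    obtain ⟨u1, u2, u3, u4, G, g1, g2, g3, g4⟩ := PF.mem_nbs hU
    have hUf := PF.isFaceDim_hull u1 u2
    have hGf := PF.isFaceDim_hull g1 (hTne.mono g2)
    rw [u3] at hUf
    rw [g4] at hGf
    refine ⟨⟨_, hUf⟩, ?_, rfl⟩
    rw [SimpleGraph.mem_neighborSet, faceGraph, SimpleGraph.fromRel_adj]
    refine ⟨fun h => u4 ?_, Or.inl ⟨_, hGf, convexHull_mono (by exact_mod_cast g2),
      convexHull_mono (by exact_mod_cast g3)⟩⟩
    exact (PF.hull_inj hT u1 (congrArg Subtype.val h)).symm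
  · refine (S.powerset.finite_toSet.image (fun U : Finset (EuclideanSpace ℝ (Fin N)) =>
      convexHull ℝ (U : Set (EuclideanSpace ℝ (Fin N))))).subset ?_
    rintro _ ⟨⟨F', hF'⟩, -, rfl⟩
    obtain ⟨U, hU, -, rfl⟩ := PF.exists_of_isExposed hF'.1 hF'.2.1
    exact ⟨U, by simpa using hU.1, rfl⟩
end

section
/- Let P be a convex polytope of dimension d ≥ 4, let E be a set of edges of P with |E| ≤ 2d-3, and let f, g be edges of P not in E. Then there exists a walk (v_0, e_1, v_1, …, e_n, v_n) in the graph G(P) such that v_0 is an endpoint of f, v_n is an endpoint of g, each vertex v_i is an endpoint of at most d-2 edges in E, and for each i with e_i ∈ E, at most d-1 edges in E have at least one common endpoint with e_i. -/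
open Set

lemma my_eps {ι : Type*} (s : Finset ι) (a b : ι → ℝ) (h : ∀ i ∈ s, 0 < a i) :
    ∃ ε : ℝ, 0 < ε ∧ ∀ i ∈ s, ε * b i < a i := by
  have h1 : ∀ᶠ ε : ℝ in nhdsWithin 0 (Ioi 0), ∀ i ∈ s, ε * b i < a i := by
    rw [Filter.eventually_all_finset]
    intro i hi
    have : Filter.Tendsto (fun ε : ℝ => ε * b i) (nhdsWithin 0 (Ioi 0)) (nhds 0) := by
      have h2 : Filter.Tendsto (fun ε : ℝ => ε * b i) (nhds 0) (nhds (0 * b i)) :=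
        (continuous_id.mul continuous_const).tendsto 0
      rw [zero_mul] at h2
      exact h2.mono_left nhdsWithin_le_nhds
    exact this.eventually_lt_const (h i hi)
  obtain ⟨ε, h2, h3⟩ := (h1.and self_mem_nhdsWithin).exists
  exact ⟨ε, h3, h2⟩

/-- every point of `V` is strictly exposed among `V` -/
def Strict {N : ℕ} (V : Finset (EuclideanSpace ℝ (Fin N))) : Prop :=
  ∀ v ∈ V, ∃ l : StrongDual ℝ (EuclideanSpace ℝ (Fin N)), ∀ x ∈ V, x ≠ v → l x < l v

lemma exists_strict {N : ℕ} {P : Set (EuclideanSpace ℝ (Fin N))} (hP : IsPolytope P) :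
    ∃ V : Finset (EuclideanSpace ℝ (Fin N)), P = convexHull ℝ (V : Set _) ∧ Strict V := by
  classical
  obtain ⟨S, hS, hPS⟩ := hP
  have hex : ∃ n, ∃ V : Finset (EuclideanSpace ℝ (Fin N)),
      V.card = n ∧ P = convexHull ℝ (V : Set _) :=
    ⟨_, hS.toFinset, rfl, by simpa using hPS⟩
  obtain ⟨V, hc, hV⟩ := Nat.find_spec hex
  refine ⟨V, hV, fun v hv => ?_⟩
  have hn : v ∉ convexHull ℝ ((V.erase v : Finset _) : Set (EuclideanSpace ℝ (Fin N))) := by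
    intro hmem
    have : P = convexHull ℝ ((V.erase v : Finset _) : Set (EuclideanSpace ℝ (Fin N))) := by
      rw [hV]
      apply subset_antisymm
      · apply convexHull_min _ (convex_convexHull ℝ _)
        intro x hx
        by_cases hxv : x = v
        · rw [hxv]; exact hmem
        · exact subset_convexHull ℝ _ (by simpa [hxv] using hx)
      · exact convexHull_mono (by simp)
    have h1 := Nat.find_min' hex ⟨V.erase v, rfl, this⟩
    have h2 := Finset.card_erase_lt_of_mem hv
    omega
  obtain ⟨l, u, h1, h2⟩ := geometric_hahn_banach_closed_point (convex_convexHull ℝ _)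
    ((V.erase v).finite_toSet.isClosed_convexHull (𝕜 := ℝ)) hn
  refine ⟨l, fun x hx hxv => (h1 x (subset_convexHull ℝ _ ?_)).trans h2⟩
  simpa [hxv] using hx

lemma max_hull {N : ℕ} {V : Finset (EuclideanSpace ℝ (Fin N))}
    (l : StrongDual ℝ (EuclideanSpace ℝ (Fin N))) {c : ℝ} (h : ∀ x ∈ V, l x ≤ c) :
    ∀ y ∈ convexHull ℝ (V : Set (EuclideanSpace ℝ (Fin N))), l y ≤ c := by
  intro y hy
  have : convexHull ℝ (V : Set (EuclideanSpace ℝ (Fin N))) ⊆ {y | l y ≤ c} := by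
    apply convexHull_min
    · intro x hx; exact h x hx
    · exact convex_halfSpace_le l.toLinearMap.isLinear c
  exact this hy

lemma face_hull {N : ℕ} {V : Finset (EuclideanSpace ℝ (Fin N))}
    {P F : Set (EuclideanSpace ℝ (Fin N))}
    (hP : P = convexHull ℝ (V : Set _)) (hF : IsExposed ℝ P F) :
    F = convexHull ℝ {x | x ∈ V ∧ x ∈ F} := by
  have hPc : IsCompact P := by rw [hP]; exact V.finite_toSet.isCompact_convexHull (𝕜 := ℝ)
  have hPv : Convex ℝ P := by rw [hP]; exact convex_convexHull ℝ _
  have hFv := hF.convex hPv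
  have hFc := hF.isCompact hPc
  apply subset_antisymm
  · conv_lhs => rw [← closure_convexHull_extremePoints hFc hFv]
    have hfin : ({x | x ∈ V ∧ x ∈ F} : Set (EuclideanSpace ℝ (Fin N))).Finite :=
      V.finite_toSet.subset (fun x hx => hx.1)
    rw [← (hfin.isClosed_convexHull (𝕜 := ℝ)).closure_eq]
    apply closure_mono
    apply convexHull_mono
    intro x hx
    refine ⟨?_, hx.1⟩
    have := hF.isExtreme.extremePoints_subset_extremePoints hx
    rw [hP] at this
    exact extremePoints_convexHull_subset this
  · exact convexHull_min (fun x hx => hx.2) hFv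

lemma vertex_face {N : ℕ} {V : Finset (EuclideanSpace ℝ (Fin N))}
    {P : Set (EuclideanSpace ℝ (Fin N))}
    (hP : P = convexHull ℝ (V : Set _)) (hV : Strict V) {v : EuclideanSpace ℝ (Fin N)}
    (hv : v ∈ V) : IsFaceDim P {v} 0 := by
  obtain ⟨l, hl⟩ := hV v hv
  have hle : ∀ x ∈ V, l x ≤ l v := fun x hx => by
    by_cases h : x = v
    · rw [h]
    · exact (hl x hx h).le
  have hvP : v ∈ P := by rw [hP]; exact subset_convexHull ℝ _ hv
  refine ⟨?_, ⟨v, rfl⟩, ?_⟩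
  · have h1 : IsExposed ℝ P (l.toExposed P) := ContinuousLinearMap.toExposed.isExposed
    have h2 := face_hull hP h1
    have h3 : {x | x ∈ V ∧ x ∈ l.toExposed P} = {v} := by
      ext x
      constructor
      · rintro ⟨hx, hx2⟩
        by_contra hne
        exact absurd (hx2.2 v hvP) (not_le.2 (hl x hx hne))
      · intro hx
        rw [mem_singleton_iff.1 hx]
        exact ⟨hv, hvP, fun y hy => max_hull l hle y (by rwa [← hP])⟩
    rw [h3, convexHull_singleton] at h2
    rwa [h2] at h1
  · simp [sdim, direction_affineSpan]

lemma vertex_of_face {N : ℕ} {V : Finset (EuclideanSpace ℝ (Fin N))}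
    {P : Set (EuclideanSpace ℝ (Fin N))}
    (hP : P = convexHull ℝ (V : Set _)) {v : EuclideanSpace ℝ (Fin N)}
    (hv : IsFaceDim P {v} 0) : v ∈ V := by
  have h := face_hull hP hv.1
  by_contra hn
  have : {x | x ∈ V ∧ x ∈ ({v} : Set (EuclideanSpace ℝ (Fin N)))} = ∅ := by
    ext x
    simp only [mem_ofPred_eq, mem_singleton_iff, mem_empty_iff_false, iff_false]
    rintro ⟨h1, rfl⟩
    exact hn h1
  rw [this, convexHull_empty] at h
  exact (singleton_nonempty v).ne_empty h

lemma edge_ends {N : ℕ} {V : Finset (EuclideanSpace ℝ (Fin N))}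
    {P : Set (EuclideanSpace ℝ (Fin N))}
    (hP : P = convexHull ℝ (V : Set _)) (hV : Strict V) {e : Set (EuclideanSpace ℝ (Fin N))}
    (he : IsFaceDim P e 1) :
    ∃ a ∈ V, ∃ b ∈ V, a ≠ b ∧ ∀ x ∈ V, (x ∈ e ↔ x = a ∨ x = b) := by
  have h := face_hull hP he.1
  set W : Set (EuclideanSpace ℝ (Fin N)) := {x | x ∈ V ∧ x ∈ e} with hW
  have hd : Module.finrank ℝ (vectorSpan ℝ W) = 1 := by
    have := he.2.2
    rwa [sdim, h, affineSpan_convexHull, direction_affineSpan] at this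
  have hcol : Collinear ℝ W := collinear_iff_finrank_le_one.2 hd.le
  have hnt : W.Nontrivial := by
    rw [← not_subsingleton_iff]
    intro hs
    have := (vectorSpan_eq_bot_iff_subsingleton (k := ℝ) (s := W)).2 hs
    rw [this] at hd
    simp at hd
  obtain ⟨a, ha, b, hb, hab⟩ := hnt
  refine ⟨a, ha.1, b, hb.1, hab, fun x hx => ⟨fun hxe => ?_, ?_⟩⟩
  · by_contra hne
    push Not at hne
    have key : ∀ p q r : EuclideanSpace ℝ (Fin N), p ∈ V → q ∈ V → r ∈ V → p ≠ q → r ≠ q →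
        Wbtw ℝ p q r → False := by
      rintro p q r hp hq hr hpq hrq ⟨t, ht, rfl⟩
      obtain ⟨l, hl⟩ := hV _ hq
      have h1 := hl p hp hpq
      have h2 := hl r hr hrq
      rw [AffineMap.lineMap_apply_module] at h1 h2
      simp only [map_add, map_smul, smul_eq_mul] at h1 h2
      obtain ⟨ht0, ht1⟩ := ht
      rcases le_total (l p) (l r) with h3 | h3
      · nlinarith [mul_nonneg (sub_nonneg.2 ht1) (sub_nonneg.2 h3)]
      · nlinarith [mul_nonneg ht0 (sub_nonneg.2 h3)]
    have hc3 : Collinear ℝ ({a, x, b} : Set (EuclideanSpace ℝ (Fin N))) :=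
      hcol.subset (by
        intro y hy
        rcases hy with rfl | rfl | rfl
        · exact ha
        · exact ⟨hx, hxe⟩
        · exact hb)
    rcases hc3.wbtw_or_wbtw_or_wbtw with h1 | h1 | h1
    · exact key _ _ _ ha.1 hx hb.1 hne.1.symm hne.2.symm h1
    · exact key _ _ _ hx hb.1 ha.1 hne.2 hab h1
    · exact key _ _ _ hb.1 ha.1 hx hab.symm hne.1 h1
  · rintro (rfl | rfl)
    · exact ha.2
    · exact hb.2

lemma edge_unique {N : ℕ} {V : Finset (EuclideanSpace ℝ (Fin N))}
    {P : Set (EuclideanSpace ℝ (Fin N))}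
    (hP : P = convexHull ℝ (V : Set _)) (hV : Strict V) {e e' : Set (EuclideanSpace ℝ (Fin N))}
    (he : IsFaceDim P e 1) (he' : IsFaceDim P e' 1) {a b : EuclideanSpace ℝ (Fin N)}
    (ha : a ∈ V) (hb : b ∈ V) (hab : a ≠ b) (h1 : a ∈ e) (h2 : b ∈ e) (h3 : a ∈ e')
    (h4 : b ∈ e') : e = e' := by
  rw [face_hull hP he.1, face_hull hP he'.1]
  congr 1
  obtain ⟨p, hp, q, hq, hpq, H⟩ := edge_ends hP hV he
  obtain ⟨p', hp', q', hq', hpq', H'⟩ := edge_ends hP hV he'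
  ext x
  simp only [mem_ofPred_eq]
  apply and_congr_right
  intro hx
  rw [H x hx, H' x hx]
  have := (H a ha).1 h1
  have := (H b hb).1 h2
  have := (H' a ha).1 h3
  have := (H' b hb).1 h4
  grind

lemma simplex_step {N : ℕ} {V : Finset (EuclideanSpace ℝ (Fin N))}
    {P : Set (EuclideanSpace ℝ (Fin N))}
    (hP : P = convexHull ℝ (V : Set _)) (hV : Strict V)
    (φ : StrongDual ℝ (EuclideanSpace ℝ (Fin N)))
    {w v : EuclideanSpace ℝ (Fin N)} (hw : w ∈ V) (hv : v ∈ V) (hwv : φ w < φ v) :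
    ∃ w' ∈ V, φ w < φ w' ∧ ∃ e, IsFaceDim P e 1 ∧ w ∈ e ∧ w' ∈ e := by
  classical
  obtain ⟨l, hl⟩ := hV w hw
  set q : EuclideanSpace ℝ (Fin N) → EuclideanSpace ℝ (Fin N) :=
    fun x => (l w - l x)⁻¹ • (x - w) with hq
  have hvw : v ≠ w := by rintro rfl; exact lt_irrefl _ hwv
  have hpos : ∀ x ∈ V.erase w, 0 < l w - l x := fun x hx => by
    have := hl x (Finset.mem_of_mem_erase hx) (Finset.ne_of_mem_erase hx)
    linarith
  have hqx : ∀ x ∈ V.erase w, x - w = (l w - l x) • q x := fun x hx => by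
    rw [hq]; simp only; rw [smul_smul, mul_inv_cancel₀ (hpos x hx).ne', one_smul]
  have hvV : v ∈ V.erase w := Finset.mem_erase.2 ⟨hvw, hv⟩
  obtain ⟨x1, hx1, hmax1⟩ := Finset.exists_max_image (V.erase w) (fun x => φ (q x)) ⟨v, hvV⟩
  obtain ⟨x0, hx0, hmax0⟩ := Finset.exists_max_image
    ((V.erase w).filter (fun x => φ (q x) = φ (q x1))) (fun x => ‖q x‖) ⟨x1, by rw [Finset.mem_filter]; exact ⟨hx1, rfl⟩⟩
  rw [Finset.mem_filter] at hx0
  obtain ⟨hx0V, hx0q⟩ := hx0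
  set η : StrongDual ℝ (EuclideanSpace ℝ (Fin N)) := innerSL ℝ (q x0) with hη
  obtain ⟨ε, hε, hεl⟩ := my_eps ((V.erase w).filter (fun x => φ (q x) ≠ φ (q x1)))
    (fun x => φ (q x1) - φ (q x)) (fun x => η (q x) - η (q x0)) (by
      intro x hx
      rw [Finset.mem_filter] at hx
      have := lt_of_le_of_ne (hmax1 x hx.1) hx.2
      linarith)
  set ψ : StrongDual ℝ (EuclideanSpace ℝ (Fin N)) := φ + ε • η with hψ
  have hψx : ∀ x ∈ V.erase w, q x = q x0 ∨ ψ (q x) < ψ (q x0) := by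
    intro x hx
    by_cases hxx : φ (q x) = φ (q x1)
    · by_cases hqq : q x = q x0
      · exact Or.inl hqq
      right
      have hn := hmax0 x (by rw [Finset.mem_filter]; exact ⟨hx, hxx⟩)
      have : η (q x) < η (q x0) := by
        simp only [hη, innerSL_apply_apply]
        have h1 : ‖q x0 - q x‖ ^ 2 = ‖q x0‖ ^ 2 - 2 * inner ℝ (q x0) (q x) + ‖q x‖ ^ 2 :=
          norm_sub_sq_real _ _
        have h2 : 0 < ‖q x0 - q x‖ := norm_pos_iff.2 (sub_ne_zero.2 (Ne.symm hqq))
        rw [real_inner_self_eq_norm_sq]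
        nlinarith [norm_nonneg (q x), norm_nonneg (q x0)]
      simp only [hψ, add_apply, smul_apply, smul_eq_mul]
      rw [hxx, hx0q]
      nlinarith
    · right
      have := hεl x (by rw [Finset.mem_filter]; exact ⟨hx, hxx⟩)
      simp only [hψ, add_apply, smul_apply, smul_eq_mul]
      rw [hx0q]
      linarith
  set θ : StrongDual ℝ (EuclideanSpace ℝ (Fin N)) := ψ + (ψ (q x0)) • l with hθ
  have hθx : ∀ x ∈ V.erase w, θ x - θ w = (l w - l x) * (ψ (q x) - ψ (q x0)) := by
    intro x hx
    have h1 : ψ x - ψ w = (l w - l x) * ψ (q x) := by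
      rw [← map_sub, hqx x hx, map_smul, smul_eq_mul]
    simp only [hθ, add_apply, smul_apply, smul_eq_mul]
    linear_combination h1
  have hθle : ∀ x ∈ V, θ x ≤ θ w := by
    intro x hx
    by_cases hxw : x = w
    · rw [hxw]
    have hx' : x ∈ V.erase w := Finset.mem_erase.2 ⟨hxw, hx⟩
    have h1 := hθx x hx'
    have h2 := hpos x hx'
    rcases hψx x hx' with h | h
    · rw [h] at h1; linarith
    · nlinarith
  have hPθ : ∀ y ∈ P, θ y ≤ θ w := fun y hy => max_hull θ hθle y (by rwa [← hP])
  have hVP : ∀ x ∈ V, x ∈ P := fun x hx => by rw [hP]; exact subset_convexHull ℝ _ hx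
  have hx0V' := Finset.mem_of_mem_erase hx0V
  have hwe : w ∈ θ.toExposed P := ⟨hVP w hw, hPθ⟩
  have hx0e : x0 ∈ θ.toExposed P := by
    refine ⟨hVP x0 hx0V', fun y hy => (hPθ y hy).trans ?_⟩
    have := hθx x0 hx0V
    rw [sub_self, mul_zero] at this
    linarith
  have hxw0 : x0 ≠ w := Finset.ne_of_mem_erase hx0V
  refine ⟨x0, hx0V', ?_, θ.toExposed P, ⟨ContinuousLinearMap.toExposed.isExposed, ⟨w, hwe⟩, ?_⟩,
    hwe, hx0e⟩
  · have h1 : 0 < φ (q v) := by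
      have : φ v - φ w = (l w - l v) * φ (q v) := by
        rw [← map_sub, hqx v hvV, map_smul, smul_eq_mul]
      have h2 := hpos v hvV
      by_contra hcon
      nlinarith
    have h2 := hmax1 v hvV
    have : φ x0 - φ w = (l w - l x0) * φ (q x0) := by
      rw [← map_sub, hqx x0 hx0V, map_smul, smul_eq_mul]
    have h3 := hpos x0 hx0V
    rw [hx0q] at this
    nlinarith
  · have hsub : affineSpan ℝ (θ.toExposed P) = affineSpan ℝ {w, x0} := by
      apply le_antisymm
      · rw [face_hull hP (ContinuousLinearMap.toExposed.isExposed (l := θ)), affineSpan_convexHull,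
          affineSpan_le]
        rintro x ⟨hx, hxe⟩
        by_cases hxw : x = w
        · rw [hxw]; exact left_mem_affineSpan_pair ℝ w x0
        have hx' : x ∈ V.erase w := Finset.mem_erase.2 ⟨hxw, hx⟩
        have hqq : q x = q x0 := by
          rcases hψx x hx' with h | h
          · exact h
          · have h1 := hθx x hx'
            have h2 := hpos x hx'
            have h3 := hxe.2 w (hVP w hw)
            nlinarith
        have h1 := hqx x hx'
        have : x = AffineMap.lineMap w x0 ((l w - l x) * (l w - l x0)⁻¹) := by
          rw [AffineMap.lineMap_apply_module', mul_smul]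
          have : (l w - l x0)⁻¹ • (x0 - w) = q x0 := rfl
          rw [this, ← hqq, ← h1]
          simp
        rw [this]
        exact AffineMap.lineMap_mem_affineSpan_pair _ _ _
      · apply affineSpan_mono
        intro y hy
        rcases hy with rfl | rfl
        · exact hwe
        · exact hx0e
    rw [sdim, hsub, direction_affineSpan, vectorSpan_pair_rev]
    exact finrank_span_singleton (by simpa [sub_eq_zero] using hxw0)

lemma half_connected {N : ℕ} {V : Finset (EuclideanSpace ℝ (Fin N))}
    {P : Set (EuclideanSpace ℝ (Fin N))}
    (hP : P = convexHull ℝ (V : Set _)) (hV : Strict V)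
    (S A : Finset (EuclideanSpace ℝ (Fin N)))
    (hcl : ∀ a ∈ V, ∀ b ∈ V, a ∉ S → b ∉ S → (∃ e, IsFaceDim P e 1 ∧ a ∈ e ∧ b ∈ e) →
      (a ∈ A ↔ b ∈ A))
    (φ : StrongDual ℝ (EuclideanSpace ℝ (Fin N))) (c : ℝ) (hS : ∀ s ∈ S, φ s = c)
    (hex : ∃ v ∈ V, c < φ v) :
    ∃ m, ∀ w ∈ V, w ∉ S → c ≤ φ w → (w ∈ A ↔ m ∈ A) := by
  classical
  obtain ⟨v, hv, hcv⟩ := hex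
  obtain ⟨m, hm, hmax⟩ := Finset.exists_max_image V (fun x => φ x) ⟨v, hv⟩
  obtain ⟨l, hl⟩ := hV m hm
  obtain ⟨ε, hε, hεl⟩ := my_eps ((V.filter (fun x => c < φ x)) ×ˢ S)
    (fun p => φ p.1 - c) (fun p => l p.2 - l p.1) (by
      intro p hp
      have := (Finset.mem_filter.1 (Finset.mem_product.1 hp).1).2
      linarith)
  set ψ : StrongDual ℝ (EuclideanSpace ℝ (Fin N)) := φ + ε • l with hψ
  have hψa : ∀ x, ψ x = φ x + ε * l x := fun x => by simp [hψ]
  have hU : ∀ w ∈ V, c < φ w → ∀ s ∈ S, ψ s < ψ w := by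
    intro w hw hcw s hs
    have := hεl (w, s) (Finset.mem_product.2 ⟨Finset.mem_filter.2 ⟨hw, hcw⟩, hs⟩)
    rw [hψa, hψa, hS s hs]
    simp only at this
    linarith
  have hψm : ∀ w ∈ V, w ≠ m → ψ w < ψ m := by
    intro w hw hne
    have h1 := hl w hw hne
    have h2 := hmax w hw
    rw [hψa, hψa]
    nlinarith
  have step1 : ∀ w ∈ V, (∀ s ∈ S, ψ s < ψ w) → (w ∈ A ↔ m ∈ A) := by
    by_contra hcon
    push Not at hcon
    obtain ⟨w0, hw0, hw0U, hw0A⟩ := hcon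
    obtain ⟨w, hw, hwmax⟩ := Finset.exists_max_image
      (V.filter (fun w => (∀ s ∈ S, ψ s < ψ w) ∧ ¬ (w ∈ A ↔ m ∈ A))) (fun x => ψ x)
      ⟨w0, Finset.mem_filter.2 ⟨hw0, hw0U, by tauto⟩⟩
    obtain ⟨hwV, hwU, hwA⟩ := Finset.mem_filter.1 hw
    have hwm : w ≠ m := by rintro rfl; exact hwA Iff.rfl
    obtain ⟨w', hw', hlt, hedge⟩ := simplex_step hP hV ψ hwV hm (hψm w hwV hwm)
    have hw'U : ∀ s ∈ S, ψ s < ψ w' := fun s hs => (hwU s hs).trans hlt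
    have hadj := hcl w hwV w' hw' (fun h => lt_irrefl _ (hwU w h))
      (fun h => lt_irrefl _ (hw'U w' h)) hedge
    have := hwmax w' (Finset.mem_filter.2 ⟨hw', hw'U, by rwa [← hadj]⟩)
    exact absurd hlt (not_lt.2 this)
  refine ⟨m, fun w hw hwS hcw => ?_⟩
  rcases hcw.lt_or_eq with h | h
  · exact step1 w hw (hU w hw h)
  · obtain ⟨w', hw', hlt, hedge⟩ := simplex_step hP hV φ hw hv (by rw [← h]; exact hcv)
    rw [← h] at hlt
    rw [hcl w hw w' hw' hwS (fun hs => by rw [hS w' hs] at hlt; exact lt_irrefl _ hlt) hedge]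
    exact step1 w' hw' (hU w' hw' hlt)

lemma card_ge {N : ℕ} (T : Finset (EuclideanSpace ℝ (Fin N))) (hT : T.Nonempty) :
    Module.finrank ℝ (vectorSpan ℝ (T : Set (EuclideanSpace ℝ (Fin N)))) + 1 ≤ T.card := by
  classical
  have h := finrank_vectorSpan_image_finset_le ℝ (id : EuclideanSpace ℝ (Fin N) → _) T
    (n := T.card - 1) (by have := hT.card_pos; omega)
  rw [Finset.image_id] at h
  have := hT.card_pos
  omega

lemma balinski {N : ℕ} {V : Finset (EuclideanSpace ℝ (Fin N))}
    {P : Set (EuclideanSpace ℝ (Fin N))}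
    (hP : P = convexHull ℝ (V : Set _)) (hV : Strict V) {d : ℕ} (hd : sdim P = d)
    (S A : Finset (EuclideanSpace ℝ (Fin N))) (hSd : S.card < d)
    (a b : EuclideanSpace ℝ (Fin N)) (ha : a ∈ V) (haS : a ∉ S) (haA : a ∈ A)
    (hb : b ∈ V) (hbS : b ∉ S) (hbA : b ∉ A) :
    ∃ x ∈ V, x ∉ S ∧ x ∈ A ∧ ∃ y ∈ V, y ∉ S ∧ y ∉ A ∧
      ∃ e, IsFaceDim P e 1 ∧ x ∈ e ∧ y ∈ e := by
  classical
  by_contra hcon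
  have hcl : ∀ a ∈ V, ∀ b ∈ V, a ∉ S → b ∉ S → (∃ e, IsFaceDim P e 1 ∧ a ∈ e ∧ b ∈ e) →
      (a ∈ A ↔ b ∈ A) := by
    rintro p hp q hq hpS hqS ⟨e, he, hpe, hqe⟩
    by_contra h
    apply hcon
    by_cases hpA : p ∈ A
    · exact ⟨p, hp, hpS, hpA, q, hq, hqS, by tauto, e, he, hpe, hqe⟩
    · exact ⟨q, hq, hqS, by tauto, p, hp, hpS, hpA, e, he, hqe, hpe⟩
  have hVd : Module.finrank ℝ (vectorSpan ℝ (V : Set (EuclideanSpace ℝ (Fin N)))) = d := by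
    rwa [sdim, hP, affineSpan_convexHull, direction_affineSpan] at hd
  have hTd := card_ge (insert a S) ⟨a, Finset.mem_insert_self _ _⟩
  have hTc := Finset.card_insert_le a S
  obtain ⟨z, hz, hzT⟩ : ∃ z ∈ vectorSpan ℝ (V : Set (EuclideanSpace ℝ (Fin N))),
      z ∉ vectorSpan ℝ ((insert a S : Finset _) : Set (EuclideanSpace ℝ (Fin N))) := by
    by_contra h
    push Not at h
    have := Submodule.finrank_mono (show vectorSpan ℝ (V : Set (EuclideanSpace ℝ (Fin N))) ≤ _ from h)
    omega
  obtain ⟨φ0, hφz, hφT⟩ := Submodule.exists_le_ker_of_notMem hzT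
  set φ : StrongDual ℝ (EuclideanSpace ℝ (Fin N)) := LinearMap.toContinuousLinearMap φ0 with hφ
  have hφa : ∀ x, φ x = φ0 x := fun x => rfl
  have hS : ∀ s ∈ S, φ s = φ a := by
    intro s hs
    have h1 : s -ᵥ a ∈ vectorSpan ℝ ((insert a S : Finset _) : Set (EuclideanSpace ℝ (Fin N))) :=
      vsub_mem_vectorSpan ℝ (by simp [hs]) (by simp)
    have := hφT h1
    rw [LinearMap.mem_ker, vsub_eq_sub, map_sub, sub_eq_zero] at this
    exact this
  have hne : ∃ v ∈ V, φ v ≠ φ a := by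
    by_contra h
    push Not at h
    have : vectorSpan ℝ (V : Set (EuclideanSpace ℝ (Fin N))) ≤ LinearMap.ker φ0 := by
      rw [vectorSpan_def, Submodule.span_le]
      rintro _ ⟨x, hx, y, hy, rfl⟩
      have h1 := h x hx
      have h2 := h y hy
      rw [hφa] at h1 h2
      simp [h1, h2]
    exact hφz (this hz)
  have hup : (∃ v ∈ V, φ a < φ v) → ∀ w ∈ V, w ∉ S → φ a ≤ φ w → w ∈ A := by
    intro h
    obtain ⟨m, hm⟩ := half_connected hP hV S A hcl φ (φ a) hS h
    intro w hw hwS hle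
    rw [hm w hw hwS hle, ← hm a ha haS le_rfl]
    exact haA
  have hdown : (∃ v ∈ V, φ v < φ a) → ∀ w ∈ V, w ∉ S → φ w ≤ φ a → w ∈ A := by
    intro h
    obtain ⟨m, hm⟩ := half_connected hP hV S A hcl (-φ) (-φ a) (fun s hs => by simp [hS s hs])
      (by obtain ⟨v, hv, h⟩ := h; exact ⟨v, hv, by simpa using h⟩)
    intro w hw hwS hle
    rw [hm w hw hwS (by simpa using hle), ← hm a ha haS (by simp)]
    exact haA
  by_cases h1 : ∃ v ∈ V, φ a < φ v
  · by_cases h2 : ∃ v ∈ V, φ v < φ a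
    · rcases le_total (φ a) (φ b) with h | h
      · exact hbA (hup h1 b hb hbS h)
      · exact hbA (hdown h2 b hb hbS h)
    · push Not at h2
      exact hbA (hup h1 b hb hbS (h2 b hb))
  · push Not at h1
    obtain ⟨v, hv, hva⟩ := hne
    exact hbA (hdown ⟨v, hv, lt_of_le_of_ne (h1 v hv) hva⟩ b hb hbS (h1 b hb))

structure PG {α : Type*} (V : Finset α) (K : Set (Set α)) (d : ℕ) : Prop where
  ends : ∀ e ∈ K, ∃ a ∈ V, ∃ b ∈ V, a ≠ b ∧ ∀ x ∈ V, (x ∈ e ↔ x = a ∨ x = b)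
  uniq : ∀ e ∈ K, ∀ e' ∈ K, ∀ a ∈ V, ∀ b ∈ V, a ≠ b → a ∈ e → b ∈ e → a ∈ e' → b ∈ e' → e = e'
  card : d + 1 ≤ V.card
  conn : ∀ S A : Finset α, S.card < d → ∀ a ∈ V, a ∉ S → a ∈ A → ∀ b ∈ V, b ∉ S → b ∉ A →
    ∃ x ∈ V, x ∉ S ∧ x ∈ A ∧ ∃ y ∈ V, y ∉ S ∧ y ∉ A ∧ ∃ e ∈ K, x ∈ e ∧ y ∈ e

section comb
open Classical

noncomputable def nbr {α : Type*} (V : Finset α) (K : Set (Set α)) (v : α) : Finset α :=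
  V.filter (fun y => y ≠ v ∧ ∃ e ∈ K, v ∈ e ∧ y ∈ e)

noncomputable def estar {α : Type*} (E : Finset (Set α)) (v : α) : Finset (Set α) :=
  E.filter (fun e => v ∈ e)

noncomputable def touch {α : Type*} (V : Finset α) (E : Finset (Set α)) (e : Set α) :
    Finset (Set α) :=
  E.filter (fun e' => ∃ x ∈ V, x ∈ e' ∧ x ∈ e)

def Stp {α : Type*} (V : Finset α) (K : Set (Set α)) (E : Finset (Set α)) (d : ℕ) (x y : α) : Prop :=
  y ∈ V ∧ (estar E y).card ≤ d - 2 ∧ x ≠ y ∧ ∃ e ∈ K, x ∈ e ∧ y ∈ e ∧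
    (e ∈ E → (touch V E e).card ≤ d - 1)

variable {α : Type*} {V : Finset α} {K : Set (Set α)} {d : ℕ}

lemma min_deg (h : PG V K d) {v : α} (hv : v ∈ V) : d ≤ (nbr V K v).card := by
  by_contra hlt
  push Not at hlt
  have hc : ((nbr V K v) ∪ {v}).card < V.card := by
    have := Finset.card_union_le (nbr V K v) {v}
    have := h.card
    simp only [Finset.card_singleton] at *
    omega
  obtain ⟨b, hb, hbn⟩ := Finset.exists_mem_notMem_of_card_lt_card hc
  simp only [Finset.mem_union, Finset.mem_singleton, not_or] at hbn
  obtain ⟨x, hx, hxS, hxA, y, hy, hyS, hyA, e, he, hxe, hye⟩ :=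
    h.conn (nbr V K v) {v} hlt v hv (by simp [nbr]) (by simp) b hb hbn.1 (by simpa using hbn.2)
  rw [Finset.mem_singleton] at hxA hyA
  subst hxA
  exact hyS (Finset.mem_filter.2 ⟨hy, hyA, e, he, hxe, hye⟩)

lemma cut_bound (h : PG V K d) (A B U : Finset α) (C : Finset (Set α)) (hA : A ⊆ V) (hB : B ⊆ V)
    (hV : V ⊆ A ∪ B ∪ U) (hAB : Disjoint A B)
    (hC : ∀ x ∈ A, ∀ y ∈ B, ∀ e ∈ K, x ∈ e → y ∈ e → e ∈ C) (k : ℕ)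
    (hk : k + A.card + U.card ≤ d + 1) : A.card * k ≤ C.card := by
  have h1 : ∀ x ∈ A, k ≤ (B ∩ nbr V K x).card := by
    intro x hx
    have hm := min_deg h (hA hx)
    have hs : nbr V K x ⊆ A.erase x ∪ U ∪ (B ∩ nbr V K x) := by
      intro y hy
      have hy' := Finset.mem_filter.1 hy
      have := hV hy'.1
      simp only [Finset.mem_union, Finset.mem_erase, Finset.mem_inter] at this ⊢
      have := hy'.2.1
      tauto
    have h2 := Finset.card_le_card hs
    have h3 := Finset.card_union_le (A.erase x ∪ U) (B ∩ nbr V K x)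
    have h4 := Finset.card_union_le (A.erase x) U
    have h5 := Finset.card_erase_of_mem hx
    have h6 := Finset.card_pos.2 ⟨x, hx⟩
    omega
  have h2 : A.card * k ≤ (A.sigma (fun x => B ∩ nbr V K x)).card := by
    rw [Finset.card_sigma, ← smul_eq_mul]
    exact Finset.card_nsmul_le_sum _ _ _ h1
  refine h2.trans ?_
  have hex : ∀ p : (Σ _ : α, α), ∃ e : Set α, p ∈ A.sigma (fun x => B ∩ nbr V K x) →
      e ∈ K ∧ p.1 ∈ e ∧ p.2 ∈ e := by
    intro p
    by_cases hp : p ∈ A.sigma (fun x => B ∩ nbr V K x)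
    · obtain ⟨e, he⟩ :=
        (Finset.mem_filter.1 (Finset.mem_inter.1 (Finset.mem_sigma.1 hp).2).2).2.2
      exact ⟨e, fun _ => he⟩
    · exact ⟨∅, fun h => absurd h hp⟩
  choose F hF using hex
  apply Finset.card_le_card_of_injOn F
  · intro p hp
    have hp' := Finset.mem_sigma.1 hp
    obtain ⟨f1, f2, f3⟩ := hF p hp
    exact hC _ hp'.1 _ (Finset.mem_inter.1 hp'.2).1 _ f1 f2 f3
  · intro p hp r hr hpr
    obtain ⟨f1, f2, f3⟩ := hF p hp
    obtain ⟨g1, g2, g3⟩ := hF r hr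
    rw [← hpr] at g2 g3
    obtain ⟨a, ha, b, hb, hab, H⟩ := h.ends _ f1
    have hp' := Finset.mem_sigma.1 hp
    have hr' := Finset.mem_sigma.1 hr
    have p1 := hp'.1
    have p2 := (Finset.mem_inter.1 hp'.2).1
    have r1 := hr'.1
    have r2 := (Finset.mem_inter.1 hr'.2).1
    have e1 := (H _ (hA p1)).1 f2
    have e2 := (H _ (hB p2)).1 f3
    have e3 := (H _ (hA r1)).1 g2
    have e4 := (H _ (hB r2)).1 g3
    have hd := Finset.disjoint_left.1 hAB
    have n1 : p.1 ≠ p.2 := fun hh => hd p1 (hh ▸ p2)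
    have n2 : r.1 ≠ r.2 := fun hh => hd r1 (hh ▸ r2)
    have n3 : p.1 ≠ r.2 := fun hh => hd p1 (hh ▸ r2)
    obtain ⟨pa, pb⟩ := p
    obtain ⟨ra, rb⟩ := r
    simp only at *
    have q1 : pa = ra := by grind
    have q2 : pb = rb := by grind
    rw [q1, q2]

lemma touch_le (h : PG V K d) {E : Finset (Set α)} {x y : α} {e : Set α} (hx : x ∈ V) (hy : y ∈ V)
    (hxy : x ≠ y) (he : e ∈ K) (heE : e ∈ E) (hxe : x ∈ e) (hye : y ∈ e) :
    (touch V E e).card + 1 ≤ (estar E x).card + (estar E y).card := by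
  have hs : touch V E e ⊆ estar E x ∪ estar E y := by
    intro e' he'
    obtain ⟨h1, z, hz, hze', hze⟩ := Finset.mem_filter.1 he'
    obtain ⟨a, ha, b, hb, hab, H⟩ := h.ends _ he
    have e1 := (H _ hx).1 hxe
    have e2 := (H _ hy).1 hye
    have e3 := (H _ hz).1 hze
    have : z = x ∨ z = y := by grind
    rw [Finset.mem_union]
    rcases this with rfl | rfl
    · exact Or.inl (Finset.mem_filter.2 ⟨h1, hze'⟩)
    · exact Or.inr (Finset.mem_filter.2 ⟨h1, hze'⟩)
  have h1 := Finset.card_le_card hs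
  have h2 := Finset.card_union_add_card_inter (estar E x) (estar E y)
  have h3 : 0 < (estar E x ∩ estar E y).card :=
    Finset.card_pos.2 ⟨e, Finset.mem_inter.2 ⟨Finset.mem_filter.2 ⟨heE, hxe⟩,
      Finset.mem_filter.2 ⟨heE, hye⟩⟩⟩
  omega

lemma reach {R : α → α → Prop} (W : Finset α) {v t : α} (hv : v ∈ W) (ht : t ∈ W)
    (H : ∀ A B : Finset α, A ⊆ W → B ⊆ W → Disjoint A B → A ∪ B = W → A.Nonempty → B.Nonempty →
      ∃ x ∈ A, ∃ y ∈ B, R x y) : Relation.ReflTransGen R v t := by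
  by_contra hn
  obtain ⟨x, hx, y, hy, hR⟩ := H (W.filter (Relation.ReflTransGen R v))
    (W.filter (fun z => ¬ Relation.ReflTransGen R v z)) (Finset.filter_subset _ _)
    (Finset.filter_subset _ _) (Finset.disjoint_filter_filter_not _ _ _)
    (Finset.filter_union_filter_not_eq _ _)
    ⟨v, Finset.mem_filter.2 ⟨hv, Relation.ReflTransGen.refl⟩⟩
    ⟨t, Finset.mem_filter.2 ⟨ht, hn⟩⟩
  exact (Finset.mem_filter.1 hy).2 ((Finset.mem_filter.1 hx).2.tail hR)

/-- no bad vertices: each side of a bad cut has many vertices of degree at least two -/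
lemma side (h : PG V K d) (hd : 4 ≤ d) {E : Finset (Set α)} (hEc : E.card ≤ 2 * d - 3)
    (hgood : ∀ v ∈ V, (estar E v).card ≤ d - 2) (A B : Finset α) (hA : A ⊆ V) (hB : B ⊆ V)
    (hAB : Disjoint A B) (hU : A ∪ B = V) (hAn : A.Nonempty) (hBn : B.Nonempty)
    (hbad : ∀ x ∈ A, ∀ y ∈ B, ∀ e ∈ K, x ∈ e → y ∈ e → e ∈ E ∧ d ≤ (touch V E e).card) :
    d ≤ (A.filter (fun x => 2 ≤ (estar E x).card)).card := by
  have hAd : d ≤ A.card := by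
    by_contra hlt
    push Not at hlt
    have hA1 := hAn.card_pos
    by_cases h1 : A.card = 1
    · obtain ⟨x, rfl⟩ := Finset.card_eq_one.1 h1
      have := cut_bound h {x} B ∅ (estar E x) hA hB (by simp [hU]) hAB
        (by
          intro x' hx' y hy e he hxe hye
          rw [Finset.mem_singleton] at hx'
          subst hx'
          exact Finset.mem_filter.2 ⟨(hbad x' (by simp) y hy e he hxe hye).1, hxe⟩) d (by simp)
      have h2 := hgood x (hA (by simp))
      simp only [Finset.card_singleton] at this
      omega
    · have := cut_bound h A B ∅ E hA hB (by simp [hU]) hAB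
        (fun x hx y hy e he hxe hye => (hbad x hx y hy e he hxe hye).1) (d + 1 - A.card)
        (by simp; omega)
      obtain ⟨k, hk⟩ : ∃ k, A.card = k + 2 := ⟨A.card - 2, by omega⟩
      obtain ⟨j, hj⟩ : ∃ j, d = k + 2 + 1 + j := ⟨d - (k + 3), by omega⟩
      rw [hk] at this
      have h3 : d + 1 - (k + 2) = j + 2 := by omega
      rw [h3] at this
      have h4 : (k + 2) * (j + 2) = k * j + 2 * k + 2 * j + 4 := by ring
      omega
  by_contra hlt
  push Not at hlt
  set T := A.filter (fun x => 2 ≤ (estar E x).card) with hT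
  obtain ⟨a, ha, haT⟩ := Finset.exists_mem_notMem_of_card_lt_card (lt_of_lt_of_le hlt hAd)
  obtain ⟨b, hb⟩ := hBn
  have hdj := Finset.disjoint_left.1 hAB
  obtain ⟨x, hx, hxS, hxA, y, hy, hyS, hyA, e, he, hxe, hye⟩ :=
    h.conn T A hlt a (hA ha) haT ha b (hB hb)
      (fun hbT => hdj (Finset.mem_filter.1 hbT).1 hb) (fun hbA => hdj hbA hb)
  have hyB : y ∈ B := by
    rw [← hU, Finset.mem_union] at hy
    tauto
  obtain ⟨heE, hte⟩ := hbad x hxA y hyB e he hxe hye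
  have h1 := touch_le h hx hy (fun hh => hyA (hh ▸ hxA)) he heE hxe hye
  have h2 := hgood y hy
  exact hxS (Finset.mem_filter.2 ⟨hxA, by omega⟩)

lemma sum_deg (h : PG V K d) {E : Finset (Set α)} (hE : ∀ e ∈ E, e ∈ K) :
    ∑ v ∈ V, (estar E v).card = 2 * E.card := by
  have := Finset.sum_card_bipartiteAbove_eq_sum_card_bipartiteBelow
    (s := V) (t := E) (fun (v : α) (e : Set α) => v ∈ e)
  simp only [Finset.bipartiteAbove, Finset.bipartiteBelow] at this
  simp only [estar]
  rw [this, mul_comm, ← smul_eq_mul]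
  rw [Finset.sum_congr rfl (g := fun _ => 2), Finset.sum_const]
  intro e he
  obtain ⟨a, ha, b, hb, hab, H⟩ := h.ends _ (hE e he)
  have : V.filter (fun x => x ∈ e) = {a, b} := by
    ext x
    simp only [Finset.mem_filter, Finset.mem_insert, Finset.mem_singleton]
    constructor
    · rintro ⟨h1, h2⟩; exact (H x h1).1 h2
    · intro hx
      have hxV : x ∈ V := by rcases hx with rfl | rfl <;> assumption
      exact ⟨hxV, (H x hxV).2 hx⟩
  rw [this, Finset.card_pair hab]

lemma case0 (h : PG V K d) (hd : 4 ≤ d) {E : Finset (Set α)} (hE : ∀ e ∈ E, e ∈ K)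
    (hEc : E.card ≤ 2 * d - 3)
    (hgood : ∀ v ∈ V, (estar E v).card ≤ d - 2) {v t : α} (hv : v ∈ V) (ht : t ∈ V) :
    Relation.ReflTransGen (Stp V K E d) v t := by
  apply reach V hv ht
  intro A B hA hB hAB hU hAn hBn
  by_contra hcon
  have hdj := Finset.disjoint_left.1 hAB
  have hbad : ∀ x ∈ A, ∀ y ∈ B, ∀ e ∈ K, x ∈ e → y ∈ e → e ∈ E ∧ d ≤ (touch V E e).card := by
    intro x hx y hy e he hxe hye
    by_contra hn
    apply hcon
    refine ⟨x, hx, y, hy, hB hy, hgood y (hB hy), fun hh => hdj hx (hh ▸ hy), e, he, hxe, hye,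
      fun heE => ?_⟩
    by_contra h2
    exact hn ⟨heE, by omega⟩
  have s1 := side h hd hEc hgood A B hA hB hAB hU hAn hBn hbad
  have s2 := side h hd hEc hgood B A hB hA hAB.symm (by rw [Finset.union_comm, hU]) hBn hAn
    (fun x hx y hy e he hxe hye => hbad y hy x hx e he hye hxe)
  have hsum := sum_deg h hE
  rw [← hU, Finset.sum_union hAB] at hsum
  have key : ∀ X : Finset α, 2 * (X.filter (fun x => 2 ≤ (estar E x).card)).card ≤
      ∑ v ∈ X, (estar E v).card := by
    intro X
    calc 2 * (X.filter (fun x => 2 ≤ (estar E x).card)).card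
        = (X.filter (fun x => 2 ≤ (estar E x).card)).card • 2 := by rw [smul_eq_mul, mul_comm]
      _ ≤ ∑ v ∈ X.filter (fun x => 2 ≤ (estar E x).card), (estar E v).card :=
          Finset.card_nsmul_le_sum _ _ _ (fun x hx => (Finset.mem_filter.1 hx).2)
      _ ≤ _ := Finset.sum_le_sum_of_subset (Finset.filter_subset _ _)
  have k1 := key A
  have k2 := key B
  omega

lemma case1 (h : PG V K d) (hd : 4 ≤ d) {E : Finset (Set α)}
    (hEc : E.card ≤ 2 * d - 3) {u : α} (hu : u ∈ V) (hbu : d - 1 ≤ (estar E u).card)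
    (hgood : ∀ v ∈ V, v ≠ u → (estar E v).card ≤ d - 2) {v t : α} (hv : v ∈ V) (ht : t ∈ V)
    (hvu : v ≠ u) (htu : t ≠ u) :
    Relation.ReflTransGen (Stp V K E d) v t := by
  apply reach (V.erase u) (Finset.mem_erase.2 ⟨hvu, hv⟩) (Finset.mem_erase.2 ⟨htu, ht⟩)
  intro A B hA hB hAB hU hAn hBn
  by_contra hcon
  have hdj := Finset.disjoint_left.1 hAB
  have hAV : A ⊆ V := hA.trans (Finset.erase_subset _ _)
  have hBV : B ⊆ V := hB.trans (Finset.erase_subset _ _)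
  have hAu : ∀ x ∈ A, x ≠ u := fun x hx => Finset.ne_of_mem_erase (hA hx)
  have hBu : ∀ x ∈ B, x ≠ u := fun x hx => Finset.ne_of_mem_erase (hB hx)
  set C := E \ estar E u with hCdef
  have hCc : C.card ≤ d - 2 := by
    have : C.card + (estar E u).card = E.card := by
      rw [hCdef]
      exact Finset.card_sdiff_add_card_eq_card (show estar E u ⊆ E from Finset.filter_subset _ _)
    omega
  have hcut : ∀ x ∈ A, ∀ y ∈ B, ∀ e ∈ K, x ∈ e → y ∈ e → e ∈ C := by
    intro x hx y hy e he hxe hye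
    by_contra hn
    apply hcon
    refine ⟨x, hx, y, hy, hBV hy, hgood y (hBV hy) (hBu y hy), fun hh => hdj hx (hh ▸ hy), e, he,
      hxe, hye, fun heE => ?_⟩
    exfalso
    apply hn
    refine Finset.mem_sdiff.2 ⟨heE, fun hs => ?_⟩
    have hue : u ∈ e := (Finset.mem_filter.1 hs).2
    obtain ⟨a, ha, b, hb, hab, H⟩ := h.ends _ he
    have e1 := (H _ (hAV hx)).1 hxe
    have e2 := (H _ (hBV hy)).1 hye
    have e3 := (H _ hu).1 hue
    have n1 := hAu x hx
    have n2 := hBu y hy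
    have n3 : x ≠ y := fun hh => hdj hx (hh ▸ hy)
    grind
  -- endpoints in A of cut edges
  set T := A.filter (fun x => ∃ e ∈ C, x ∈ e ∧ ∃ y ∈ B, y ∈ e ∧ e ∈ K) with hT
  have hTc : T.card ≤ C.card := by
    have hex : ∀ x, ∃ e : Set α, x ∈ T → e ∈ C ∧ x ∈ e ∧ ∃ y ∈ B, y ∈ e ∧ e ∈ K := by
      intro x
      by_cases hx : x ∈ T
      · obtain ⟨e, he⟩ := (Finset.mem_filter.1 hx).2
        exact ⟨e, fun _ => he⟩
      · exact ⟨∅, fun hh => absurd hh hx⟩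
    choose F hF using hex
    apply Finset.card_le_card_of_injOn F
    · intro x hx; exact (hF x hx).1
    · intro x hx x' hx' hxx
      obtain ⟨-, h1, y, hy, hye, hK⟩ := hF x hx
      obtain ⟨-, h1', -⟩ := hF x' hx'
      rw [← hxx] at h1'
      have hxA := (Finset.mem_filter.1 hx).1
      have hxA' := (Finset.mem_filter.1 hx').1
      obtain ⟨a, ha, b, hb, hab, H⟩ := h.ends _ hK
      have e1 := (H _ (hAV hxA)).1 h1
      have e2 := (H _ (hBV hy)).1 hye
      have e3 := (H _ (hAV hxA')).1 h1'
      have n1 : x ≠ y := fun hh => hdj hxA (hh ▸ hy)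
      have n2 : x' ≠ y := fun hh => hdj hxA' (hh ▸ hy)
      grind
  have hAc : A.card ≤ d - 2 := by
    by_contra hlt
    push Not at hlt
    obtain ⟨a, ha, haT⟩ := Finset.exists_mem_notMem_of_card_lt_card
      (show T.card < A.card by omega)
    obtain ⟨b, hb⟩ := hBn
    obtain ⟨x, hx, hxS, hxA, y, hy, hyS, hyA, e, he, hxe, hye⟩ :=
      h.conn (insert u T) A (by have := Finset.card_insert_le u T; omega) a (hAV ha)
        (by rw [Finset.mem_insert]; rintro (hh | hh); exacts [hAu a ha hh, haT hh]) ha b (hBV hb)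
        (by
          rw [Finset.mem_insert]
          rintro (hh | hh)
          exacts [hBu b hb hh, hdj (Finset.mem_filter.1 hh).1 hb]) (fun hbA => hdj hbA hb)
    rw [Finset.mem_insert, not_or] at hxS hyS
    have hyB : y ∈ B := by
      have : y ∈ V.erase u := Finset.mem_erase.2 ⟨hyS.1, hy⟩
      rw [← hU, Finset.mem_union] at this
      tauto
    exact hxS.2 (Finset.mem_filter.2 ⟨hxA, e, hcut x hxA y hyB e he hxe hye, hxe, y, hyB, hye, he⟩)
  have hA1 := hAn.card_pos
  have hb := cut_bound h A B {u} C hAV hBV (by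
      rw [hU]; intro x hx
      simp only [Finset.mem_union, Finset.mem_erase, Finset.mem_singleton]
      tauto) hAB hcut (d - A.card) (by simp; omega)
  obtain ⟨k, hk⟩ : ∃ k, A.card = k + 1 := ⟨A.card - 1, by omega⟩
  obtain ⟨j, hj⟩ : ∃ j, d = k + 1 + 2 + j := ⟨d - (k + 3), by omega⟩
  rw [hk] at hb
  have h3 : d - (k + 1) = j + 2 := by omega
  rw [h3] at hb
  have h4 : (k + 1) * (j + 2) = k * j + 2 * k + j + 2 := by ring
  omega

lemma common_le (h : PG V K d) {E : Finset (Set α)} (hE : ∀ e ∈ E, e ∈ K) {u w : α} (hu : u ∈ V)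
    (hw : w ∈ V) (huw : u ≠ w) : (estar E u ∩ estar E w).card ≤ 1 := by
  rw [Finset.card_le_one]
  intro e he e' he'
  obtain ⟨h1, h2⟩ := Finset.mem_inter.1 he
  obtain ⟨h1', h2'⟩ := Finset.mem_inter.1 he'
  have g1 := Finset.mem_filter.1 h1
  have g2 := Finset.mem_filter.1 h2
  have g1' := Finset.mem_filter.1 h1'
  have g2' := Finset.mem_filter.1 h2'
  exact h.uniq e (hE e g1.1) e' (hE e' g1'.1) u hu w hw huw g1.2 g2.2 g1'.2 g2'.2

lemma comb_main (h : PG V K d) (hd : 4 ≤ d) {E : Finset (Set α)} (hE : ∀ e ∈ E, e ∈ K)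
    (hEc : E.card ≤ 2 * d - 3) {f g : Set α} (hf : f ∈ K) (hg : g ∈ K) (hfE : f ∉ E)
    (hgE : g ∉ E) :
    ∃ v ∈ V, v ∈ f ∧ (estar E v).card ≤ d - 2 ∧ ∃ t ∈ V, t ∈ g ∧
      Relation.ReflTransGen (Stp V K E d) v t := by
  have pick : ∀ e ∈ K, ∀ u, ∃ v ∈ V, v ∈ e ∧ v ≠ u := by
    intro e he u
    obtain ⟨a, ha, b, hb, hab, H⟩ := h.ends _ he
    by_cases hau : a = u
    · exact ⟨b, hb, (H b hb).2 (Or.inr rfl), by rintro rfl; exact hab hau⟩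
    · exact ⟨a, ha, (H a ha).2 (Or.inl rfl), hau⟩
  by_cases hg0 : ∀ v ∈ V, (estar E v).card ≤ d - 2
  · obtain ⟨a, ha, a', -, -, H⟩ := h.ends _ hf
    obtain ⟨b, hb, b', -, -, H'⟩ := h.ends _ hg
    exact ⟨a, ha, (H a ha).2 (Or.inl rfl), hg0 a ha, b, hb, (H' b hb).2 (Or.inl rfl),
      case0 h hd hE hEc hg0 ha hb⟩
  push Not at hg0
  obtain ⟨u, hu, hub⟩ := hg0
  by_cases hg1 : ∀ v ∈ V, v ≠ u → (estar E v).card ≤ d - 2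
  · obtain ⟨a, ha, haf, hau⟩ := pick f hf u
    obtain ⟨b, hb, hbg, hbu⟩ := pick g hg u
    exact ⟨a, ha, haf, hg1 a ha hau, b, hb, hbg, case1 h hd hEc hu (by omega) hg1 ha hb hau hbu⟩
  push Not at hg1
  obtain ⟨w, hw, hwu, hwb⟩ := hg1
  have hc := common_le h hE hu hw (Ne.symm hwu)
  have hui := Finset.card_union_add_card_inter (estar E u) (estar E w)
  have hsub : estar E u ∪ estar E w ⊆ E :=
    Finset.union_subset (Finset.filter_subset _ _) (Finset.filter_subset _ _)
  have hEu : estar E u ∪ estar E w = E := Finset.eq_of_subset_of_card_le hsub (by omega)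
  have hi : 0 < (estar E u ∩ estar E w).card := by
    have := Finset.card_le_card hsub
    omega
  obtain ⟨e0, he0⟩ := Finset.card_pos.1 hi
  obtain ⟨h1, h2⟩ := Finset.mem_inter.1 he0
  obtain ⟨he0E, he0u⟩ := Finset.mem_filter.1 h1
  have he0w := (Finset.mem_filter.1 h2).2
  have hgood : ∀ x ∈ V, x ≠ u → x ≠ w → (estar E x).card ≤ d - 2 := by
    intro x hx hxu hxw
    have c1 := common_le h hE hx hu hxu
    have c2 := common_le h hE hx hw hxw
    have : estar E x ⊆ (estar E x ∩ estar E u) ∪ (estar E x ∩ estar E w) := by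
      rw [← Finset.inter_union_distrib_left, hEu]
      exact Finset.subset_inter (Finset.Subset.refl _) (Finset.filter_subset _ _)
    have := Finset.card_le_card this
    have := Finset.card_union_le (estar E x ∩ estar E u) (estar E x ∩ estar E w)
    omega
  have pick2 : ∀ e ∈ K, e ∉ E → ∃ v ∈ V, v ∈ e ∧ v ≠ u ∧ v ≠ w := by
    intro e he heE
    obtain ⟨a, ha, b, hb, hab, H⟩ := h.ends _ he
    by_contra hn
    push Not at hn
    have hae := (H a ha).2 (Or.inl rfl)
    have hbe := (H b hb).2 (Or.inr rfl)
    have na := hn a ha hae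
    have nb := hn b hb hbe
    have : u ∈ e ∧ w ∈ e := by grind
    have := h.uniq e he e0 (hE e0 he0E) u hu w hw (Ne.symm hwu) this.1 this.2 he0u he0w
    exact heE (this ▸ he0E)
  obtain ⟨a, ha, haf, hau, haw⟩ := pick2 f hf hfE
  obtain ⟨b, hb, hbg, hbu, hbw⟩ := pick2 g hg hgE
  refine ⟨a, ha, haf, hgood a ha hau haw, b, hb, hbg, ?_⟩
  apply reach (V \ {u, w}) (by simp [*]) (by simp [*])
  intro A B hA hB hAB hU ⟨p, hp⟩ ⟨q, hq⟩
  have hdj := Finset.disjoint_left.1 hAB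
  have hp' := Finset.mem_sdiff.1 (hA hp)
  have hq' := Finset.mem_sdiff.1 (hB hq)
  obtain ⟨x, hx, hxS, hxA, y, hy, hyS, hyA, e, he, hxe, hye⟩ :=
    h.conn {u, w} A (by rw [Finset.card_pair (Ne.symm hwu)]; omega) p hp'.1 hp'.2 hp q hq'.1 hq'.2
      (fun hh => hdj hh hq)
  have hyB : y ∈ B := by
    have : y ∈ V \ {u, w} := Finset.mem_sdiff.2 ⟨hy, hyS⟩
    rw [← hU, Finset.mem_union] at this
    tauto
  simp only [Finset.mem_insert, Finset.mem_singleton, not_or] at hxS hyS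
  have hxy : x ≠ y := fun hh => hyA (hh ▸ hxA)
  refine ⟨x, hxA, y, hyB, hy, hgood y hy hyS.1 hyS.2, hxy, e, he, hxe, hye, fun heE => ?_⟩
  exfalso
  obtain ⟨a', ha', b', hb', hab', H⟩ := h.ends _ he
  have e1 := (H _ hx).1 hxe
  have e2 := (H _ hy).1 hye
  have e3 := H _ hu
  have e4 := H _ hw
  rw [← hEu, Finset.mem_union, estar, estar, Finset.mem_filter, Finset.mem_filter] at heE
  grind

lemma to_walk {E : Finset (Set α)} {v t : α} (hv : v ∈ V)
    (hg : (estar E v).card ≤ d - 2) (h : Relation.ReflTransGen (Stp V K E d) v t) :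
    ∃ (n : ℕ) (p : ℕ → α) (e : ℕ → Set α), p 0 = v ∧ p n = t ∧
      (∀ i, i ≤ n → p i ∈ V ∧ (estar E (p i)).card ≤ d - 2) ∧
      (∀ i, i < n → e i ∈ K ∧ p i ∈ e i ∧ p (i + 1) ∈ e i ∧ p i ≠ p (i + 1) ∧
        (e i ∈ E → (touch V E (e i)).card ≤ d - 1)) := by
  induction h with
  | refl => exact ⟨0, fun _ => v, fun _ => ∅, rfl, rfl, fun i _ => ⟨hv, hg⟩, fun i hi => by omega⟩
  | @tail b c hab hbc ih =>
    obtain ⟨n, p, e, h0, hn, hp, he⟩ := ih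
    obtain ⟨hc, hcg, hne, e', he', hbe, hce, ht⟩ := hbc
    refine ⟨n + 1, fun i => if i ≤ n then p i else c, fun i => if i < n then e i else e',
      by simpa using h0, by simp, ?_, ?_⟩
    · intro i hi
      by_cases hin : i ≤ n
      · simp only [hin, if_true]; exact hp i hin
      · simp only [hin, if_false]; exact ⟨hc, hcg⟩
    · intro i hi
      by_cases hin : i < n
      · simp only [hin, hin.le, Nat.succ_le_of_lt hin, if_true]; exact he i hin
      · obtain rfl : i = n := by omega
        simp only [lt_irrefl, le_refl, if_true, if_false, Nat.not_succ_le_self, hn]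
        exact ⟨he', hbe, hce, hne, ht⟩

end comb

/-- Let `P` be a `d`-dimensional convex polytope with `d ≥ 4`, let `E` be a set
of edges of `P` with `|E| ≤ 2d-3` and let `f, g` be edges of `P` not in `E`.
Then there is a walk `(v_0, e_1, v_1, …, e_n, v_n)` in the graph `G(P)` such
that `v_0` is an endpoint of `f`, `v_n` is an endpoint of `g`, every vertex
`v_i` is an endpoint of at most `d-2` edges in `E`, and for every `i` with
`e_i ∈ E`, at most `d-1` edges in `E` have a common endpoint with `e_i`. -/
theorem stmt_11 (d : ℕ) (hd : 4 ≤ d) {N : ℕ}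
    (P : Set (EuclideanSpace ℝ (Fin N))) (hP : IsPolytope P) (hdim : sdim P = d)
    (E : Set (Set (EuclideanSpace ℝ (Fin N)))) (hE : ∀ e ∈ E, IsFaceDim P e 1)
    (hEfin : E.Finite) (hEcard : E.ncard ≤ 2 * d - 3)
    (f g : Set (EuclideanSpace ℝ (Fin N)))
    (hf : IsFaceDim P f 1) (hg : IsFaceDim P g 1) (hfE : f ∉ E) (hgE : g ∉ E) :
    ∃ (n : ℕ) (v : Fin (n + 1) → EuclideanSpace ℝ (Fin N))
      (e : Fin n → Set (EuclideanSpace ℝ (Fin N))),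
      (∀ i, IsFaceDim P {v i} 0) ∧
      (∀ i : Fin n, IsFaceDim P (e i) 1 ∧ v i.castSucc ∈ e i ∧ v i.succ ∈ e i ∧
        v i.castSucc ≠ v i.succ) ∧
      v 0 ∈ f ∧ v (Fin.last n) ∈ g ∧
      (∀ i, {e' ∈ E | v i ∈ e'}.ncard ≤ d - 2) ∧
      (∀ i : Fin n, e i ∈ E →
        {e' ∈ E | ∃ x, IsFaceDim P {x} 0 ∧ x ∈ e' ∧ x ∈ e i}.ncard ≤ d - 1) := by

  classical
  obtain ⟨V, hPV, hV⟩ := exists_strict hP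
  have hVn : V.Nonempty := by
    rw [Finset.nonempty_iff_ne_empty]
    rintro rfl
    obtain ⟨x, hx⟩ := hf.2.1
    have := hf.1.subset hx
    rw [hPV] at this
    simp at this
  have hcard : d + 1 ≤ V.card := by
    have h1 := card_ge V hVn
    have h2 := hdim
    rw [sdim, hPV, affineSpan_convexHull, direction_affineSpan] at h2
    omega
  have hPG : PG V {e | IsFaceDim P e 1} d :=
    { ends := fun e he => edge_ends hPV hV he
      uniq := fun e he e' he' a ha b hb hab h1 h2 h3 h4 =>
        edge_unique hPV hV he he' ha hb hab h1 h2 h3 h4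
      card := hcard
      conn := fun S A hS a ha haS haA b hb hbS hbA =>
        balinski hPV hV hdim S A hS a b ha haS haA hb hbS hbA }
  obtain ⟨v, hv, hvf, hvg, t, ht, htg, hR⟩ := comb_main hPG hd (E := hEfin.toFinset)
    (fun e he => hE e (by simpa using he)) (by rwa [← Set.ncard_eq_toFinset_card E hEfin]) hf hg
    (by simpa using hfE) (by simpa using hgE)
  obtain ⟨n, p, e, h0, hn, hp, he⟩ := to_walk hv hvg hR
  have hstar : ∀ x, {e' ∈ E | x ∈ e'}.ncard = (estar hEfin.toFinset x).card := by
    intro x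
    rw [← Set.ncard_coe_finset]
    congr 1
    ext e'
    simp [estar]
  have htouch : ∀ e₀ : Set (EuclideanSpace ℝ (Fin N)),
      {e' ∈ E | ∃ x, IsFaceDim P {x} 0 ∧ x ∈ e' ∧ x ∈ e₀}.ncard =
      (touch V hEfin.toFinset e₀).card := by
    intro e₀
    rw [← Set.ncard_coe_finset]
    congr 1
    ext e'
    simp only [touch, Finset.coe_filter, Set.Finite.mem_toFinset]
    refine and_congr_right fun _ => exists_congr fun x => and_congr_left fun _ => ?_
    exact ⟨fun hx => vertex_of_face hPV hx, fun hx => vertex_face hPV hV hx⟩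
  refine ⟨n, fun i => p i, fun i => e i, ?_, ?_, ?_, ?_, ?_, ?_⟩
  · intro i
    exact vertex_face hPV hV (hp i (by omega)).1
  · intro i
    obtain ⟨h1, h2, h3, h4, -⟩ := he i i.2
    exact ⟨h1, by simpa using h2, by simpa using h3, by simpa using h4⟩
  · simpa [h0] using hvf
  · simpa [hn] using htg
  · intro i
    rw [hstar]
    exact (hp i (by omega)).2
  · intro i hi
    rw [htouch]
    exact (he i i.2).2.2.2.2 (by simpa using hi)
end

section
/- For every convex polytope P of dimension d and every integer k with 0 ≤ k ≤ d-1, the graph G_k(P) is connected. -/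
open Set

abbrev EE (N : ℕ) := EuclideanSpace ℝ (Fin N)

lemma sdim_eq {N : ℕ} (P : Set (EE N)) : sdim P = Module.finrank ℝ (vectorSpan ℝ P) := by
  rw [sdim, direction_affineSpan]

lemma poly_compact {N : ℕ} {P : Set (EE N)} (hP : IsPolytope P) : IsCompact P := by
  obtain ⟨S, hS, rfl⟩ := hP
  exact hS.isCompact_convexHull ℝ

lemma poly_convex {N : ℕ} {P : Set (EE N)} (hP : IsPolytope P) : Convex ℝ P := by
  obtain ⟨S, hS, rfl⟩ := hP
  exact convex_convexHull ℝ S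

lemma face_hull_s16 {N : ℕ} {S F : Set (EE N)} (hS : S.Finite)
    (hF : IsExposed ℝ (convexHull ℝ S) F) :
    F.extremePoints ℝ ⊆ S ∧ F = convexHull ℝ (F.extremePoints ℝ) := by
  have h1 : F.extremePoints ℝ ⊆ S :=
    hF.isExtreme.extremePoints_subset_extremePoints.trans extremePoints_convexHull_subset
  refine ⟨h1, ?_⟩
  have h2 := closure_convexHull_extremePoints (hF.isCompact (hS.isCompact_convexHull ℝ))
    (hF.convex (convex_convexHull ℝ S))
  rw [((hS.subset h1).isClosed_convexHull ℝ).closure_eq] at h2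
  exact h2.symm

lemma face_poly {N : ℕ} {P F : Set (EE N)} (hP : IsPolytope P) (hF : IsExposed ℝ P F) :
    IsPolytope F := by
  obtain ⟨S, hS, rfl⟩ := hP
  exact ⟨_, hS.subset (face_hull_s16 hS hF).1, (face_hull_s16 hS hF).2⟩

lemma faces_finite {N : ℕ} {P : Set (EE N)} (hP : IsPolytope P) :
    {F | IsExposed ℝ P F}.Finite := by
  obtain ⟨S, hS, rfl⟩ := hP
  refine (hS.finite_subsets.image (fun T => convexHull ℝ T)).subset ?_
  intro F hF
  exact ⟨_, (face_hull_s16 hS hF).1, (face_hull_s16 hS hF).2.symm⟩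

lemma face_trans {N : ℕ} {P F G : Set (EE N)} (hP : IsPolytope P) (hF : IsExposed ℝ P F)
    (hG : IsExposed ℝ F G) : IsExposed ℝ P G := by
  intro hGne
  obtain ⟨w, hw⟩ := hGne
  have hwF := hG.subset hw
  have hwP := hF.subset hwF
  obtain ⟨l, hl⟩ := hF ⟨w, hwF⟩
  obtain ⟨m, hm⟩ := hG ⟨w, hw⟩
  have hGc : Convex ℝ G := hG.convex (hF.convex (poly_convex hP))
  obtain ⟨S, hS, rfl⟩ := hP
  have hlw : ∀ y ∈ convexHull ℝ S, l y ≤ l w := by rw [hl] at hwF; exact hwF.2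
  have hmw : ∀ y ∈ F, m y ≤ m w := by rw [hm] at hw; exact hw.2
  -- choose M
  obtain ⟨M, hM⟩ : ∃ M : ℝ, ∀ s ∈ S, l s < l w → M * l s + m s < M * l w + m w := by
    have : ∀ s ∈ S, ∃ M0 : ℝ, ∀ M ≥ M0, l s < l w → M * l s + m s < M * l w + m w := by
      intro s hs
      by_cases h : l s < l w
      · refine ⟨(m s - m w) / (l w - l s) + 1, fun M hM _ => ?_⟩
        have h0 : 0 < l w - l s := by linarith
        have : (m s - m w) / (l w - l s) < M := by linarith
        rw [div_lt_iff₀ h0] at this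
        linarith
      · exact ⟨0, fun M _ h' => absurd h' h⟩
    choose! f hf using this
    obtain ⟨B, hB⟩ := (hS.image f).bddAbove
    exact ⟨B, fun s hs => hf s hs B (hB ⟨s, hs, rfl⟩)⟩
  have hSF : ∀ s ∈ S, l s = l w → s ∈ F := by
    intro s hs h
    rw [hl]
    exact ⟨subset_convexHull ℝ S hs, fun y hy => h ▸ hlw y hy⟩
  have hSle : ∀ s ∈ S, M * l s + m s ≤ M * l w + m w := by
    intro s hs
    rcases (hlw s (subset_convexHull ℝ S hs)).lt_or_eq with h | h
    · exact (hM s hs h).le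
    · rw [h]; linarith [hmw s (hSF s hs h)]
  have hPle : ∀ y ∈ convexHull ℝ S, (M • l + m) y ≤ (M • l + m) w := by
    intro y hy
    have : convexHull ℝ S ⊆ {y | (M • l + m) y ≤ (M • l + m) w} := by
      apply convexHull_min
      · intro s hs; simpa using hSle s hs
      · exact convex_halfSpace_le (M • l + m).toLinearMap.isLinear _
    exact this hy
  refine ⟨M • l + m, Subset.antisymm ?_ ?_⟩
  · intro x hx
    have hxF := hG.subset hx
    refine ⟨hF.subset hxF, fun y hy => (hPle y hy).trans ?_⟩
    have h1 : m w ≤ m x := by rw [hm] at hx; exact hx.2 w hwF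
    have h2 : l w = l x := by
      refine le_antisymm ?_ (hlw x (hF.subset hxF))
      rw [hl] at hxF; exact hxF.2 w hwP
    simp [h2, h1]
  · set Q := {x ∈ convexHull ℝ S | ∀ y ∈ convexHull ℝ S, (M • l + m) y ≤ (M • l + m) x} with hQd
    have hQ : IsExposed ℝ (convexHull ℝ S) Q := fun _ => ⟨_, rfl⟩
    obtain ⟨hq1, hq2⟩ := face_hull_s16 hS hQ
    rw [hq2]
    refine convexHull_min ?_ hGc
    intro s hs
    have hsS := hq1 hs
    have hsQ : s ∈ Q := extremePoints_subset hs
    have hv := hsQ.2 w hwP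
    simp at hv
    have hlsw : l s = l w := by
      by_contra hne
      have := hM s hsS (lt_of_le_of_ne (hlw s hsQ.1) hne)
      linarith
    have hsF := hSF s hsS hlsw
    rw [hm]
    refine ⟨hsF, fun y hy => (hmw y hy).trans ?_⟩
    rw [hlsw] at hv
    linarith

lemma face_lt {N : ℕ} {P F : Set (EE N)} (hF : IsExposed ℝ P F) (hne : F.Nonempty)
    (hFP : F ≠ P) : sdim F < sdim P := by
  obtain ⟨w, hw⟩ := hne
  obtain ⟨l, hl⟩ := hF ⟨w, hw⟩
  have hsub := hF.subset
  obtain ⟨y, hy, hyF⟩ : ∃ y ∈ P, y ∉ F := by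
    by_contra! h
    exact hFP (hsub.antisymm h)
  rw [sdim_eq, sdim_eq]
  apply Submodule.finrank_lt_finrank_of_lt
  refine lt_of_le_of_ne (vectorSpan_mono ℝ hsub) ?_
  intro heq
  have h1 : vectorSpan ℝ F ≤ LinearMap.ker l.toLinearMap := by
    rw [vectorSpan, Submodule.span_le]
    rintro _ ⟨a, ha, b, hb, rfl⟩
    rw [hl] at ha hb
    have := ha.2 b hb.1
    have := hb.2 a ha.1
    simp
    linarith
  have h2 : y - w ∈ vectorSpan ℝ F := by
    rw [heq]; exact vsub_mem_vectorSpan ℝ hy (hsub hw)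
  have h3 := h1 h2
  simp at h3
  apply hyF
  rw [hl] at hw ⊢
  refine ⟨hy, fun z hz => (hw.2 z hz).trans (by linarith)⟩

lemma center {N : ℕ} {P F : Set (EE N)} (hP : IsPolytope P) (hF : IsExposed ℝ P F)
    (hne : F.Nonempty) : ∃ x ∈ F, ∀ A, IsExposed ℝ P A → x ∈ A → F ⊆ A := by
  obtain ⟨T, hT, hTF⟩ := face_poly hP hF
  have hTne : T.Nonempty := by
    rw [hTF] at hne; exact convexHull_nonempty_iff.1 hne
  lift T to Finset (EE N) using hT
  have hTne' : T.Nonempty := by simpa using hTne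
  have hc : (0:ℝ) < T.card := by exact_mod_cast hTne'.card_pos
  have hTsub : ∀ t ∈ T, t ∈ F := fun t ht => by
    rw [hTF]; exact subset_convexHull ℝ _ ht
  refine ⟨∑ t ∈ T, (T.card : ℝ)⁻¹ • t, ?_, ?_⟩
  · refine (hF.convex (poly_convex hP)).sum_mem (fun _ _ => by positivity) ?_ hTsub
    simp [hc.ne']
  · intro A hA hx
    obtain ⟨l, hl⟩ := hA ⟨_, hx⟩
    set x := ∑ t ∈ T, (T.card : ℝ)⁻¹ • t with hxd
    have hAc := hA.convex (poly_convex hP)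
    rw [hTF]
    refine convexHull_min ?_ hAc
    rw [hl] at hx
    have hle : ∀ t ∈ T, (T.card : ℝ)⁻¹ * l t ≤ (T.card : ℝ)⁻¹ * l x := fun t ht =>
      mul_le_mul_of_nonneg_left (hx.2 t (hF.subset (hTsub t ht))) (by positivity)
    have hsum : ∑ t ∈ T, (T.card : ℝ)⁻¹ * l t = ∑ t ∈ T, (T.card : ℝ)⁻¹ * l x := by
      have : l x = ∑ t ∈ T, (T.card : ℝ)⁻¹ * l t := by
        rw [hxd, map_sum]; simp
      rw [← this]
      simp [hc.ne']
    rw [Finset.sum_eq_sum_iff_of_le hle] at hsum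
    intro t ht
    have h := mul_left_cancel₀ (by positivity) (hsum t ht)
    rw [hl]
    exact ⟨hF.subset (hTsub t ht), fun y hy => h ▸ hx.2 y hy⟩

lemma ray {N : ℕ} {P : Set (EE N)} (hP : IsPolytope P) (hne : P.Nonempty) :
    ∃ o ∈ P, ∃ ρ : vectorSpan ℝ P → EE N,
      ContinuousOn ρ {0}ᶜ ∧
      (∀ F, IsExposed ℝ P F → o ∈ F → F = P) ∧
      (∀ u, u ≠ 0 → ∃ A, IsExposed ℝ P A ∧ o ∉ A ∧ ρ u ∈ A) ∧
      (∀ u : vectorSpan ℝ P, u ≠ 0 → ∃ g : ℝ, (u : EE N) = g • (ρ u - o)) ∧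
      (∀ F, IsExposed ℝ P F → o ∉ F → ∀ u : vectorSpan ℝ P, o + u ∈ F → ρ u = o + u) := by
  have hc := poly_convex hP
  have hK := poly_compact hP
  obtain ⟨o, ho⟩ := Set.Nonempty.intrinsicInterior hc hne
  have hoP : o ∈ P := intrinsicInterior_subset ho
  set Q : Set (vectorSpan ℝ P) := {u | o + (u : EE N) ∈ P} with hQ
  have hQ0 : Q ∈ nhds 0 := by
    obtain ⟨y, hy, rfl⟩ := mem_intrinsicInterior.1 ho
    rw [mem_interior_iff_mem_nhds] at hy
    have hcont : Continuous (fun u : vectorSpan ℝ P =>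
        (⟨(u : EE N) +ᵥ (y : EE N), by
          refine AffineSubspace.vadd_mem_of_mem_direction ?_ y.2
          rw [direction_affineSpan]; exact u.2⟩ : affineSpan ℝ P)) := by
      apply Continuous.subtype_mk
      simp only [vadd_eq_add]
      fun_prop
    have := hcont.tendsto 0
    have h0 : (⟨((0 : vectorSpan ℝ P) : EE N) +ᵥ (y : EE N), by simp⟩ : affineSpan ℝ P) = y := by
      ext; simp
    rw [h0] at this
    have h2 := this hy
    refine Filter.mem_of_superset h2 ?_
    intro u hu
    simp only [mem_preimage, vadd_eq_add] at hu
    simp only [hQ, mem_ofPred_eq]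
    rwa [add_comm]
  have hQc : Convex ℝ Q := by
    intro a ha b hb s t hs ht hst
    have := hc ha hb hs ht hst
    simp only [hQ, mem_ofPred_eq] at *
    convert this using 1
    push_cast
    have : o = s • o + t • o := by rw [← add_smul, hst, one_smul]
    nth_rw 1 [this]
    module
  have hQcl : IsClosed Q := hK.isClosed.preimage (by fun_prop)
  have hQb : Bornology.IsVonNBounded ℝ Q := by
    rw [NormedSpace.isVonNBounded_iff]
    obtain ⟨R, hR⟩ := hK.isBounded.exists_norm_le
    rw [isBounded_iff_forall_norm_le]
    refine ⟨R + ‖o‖, fun u hu => ?_⟩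
    have h1 := hR _ hu
    have h2 : (u : EE N) = (o + u) - o := by abel
    have h3 : ‖u‖ = ‖(u : EE N)‖ := rfl
    rw [h3, h2]
    exact (norm_sub_le _ _).trans (by linarith)
  have habs : Absorbent ℝ Q := absorbent_nhds_zero hQ0
  have hgpos : ∀ u, u ≠ 0 → 0 < gauge Q u := fun u hu => (gauge_pos habs hQb).2 hu
  have hQr : ∀ u, u ≠ 0 → gauge Q ((gauge Q u)⁻¹ • u) = 1 := by
    intro u hu
    rw [gauge_smul_of_nonneg (inv_nonneg.2 (hgpos u hu).le), smul_eq_mul,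
      inv_mul_cancel₀ (hgpos u hu).ne']
  have hQm : ∀ u, u ≠ 0 → (gauge Q u)⁻¹ • u ∈ Q := by
    intro u hu
    have h := (gauge_le_one_iff_mem_closure hQc hQ0).1 (hQr u hu).le
    rwa [hQcl.closure_eq] at h
  refine ⟨o, hoP, fun u => o + (gauge Q u)⁻¹ • (u : EE N), ?_, ?_, ?_, ?_, ?_⟩
  · have := (continuous_gauge hQc hQ0).continuousOn (s := {0}ᶜ)
    have h2 := this.inv₀ (fun u hu => (hgpos u hu).ne')
    exact continuousOn_const.add (h2.smul continuous_subtype_val.continuousOn)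
  · intro F hF hoF
    refine hF.subset.antisymm ?_
    intro y hy
    obtain ⟨l, hl⟩ := hF ⟨o, hoF⟩
    rw [hl] at hoF ⊢
    refine ⟨hy, fun z hz => (hoF.2 z hz).trans ?_⟩
    let u : vectorSpan ℝ P := ⟨y - o, vsub_mem_vectorSpan ℝ hy hoP⟩
    have ht : Filter.Tendsto (fun t : ℝ => t • u) (nhds 0) (nhds 0) := by
      have : Continuous (fun t : ℝ => t • u) := by fun_prop
      simpa using this.tendsto 0
    obtain ⟨ε, hε, hball⟩ := Metric.mem_nhds_iff.1 (ht hQ0)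
    have hm : (-(ε/2)) ∈ Metric.ball (0:ℝ) ε := by
      simp [abs_of_pos hε]; linarith
    have h1 : o + (-(ε/2)) • (y - o) ∈ P := hball hm
    have h2 := hoF.2 _ h1
    simp at h2
    nlinarith
  · intro u hu
    set v := (gauge Q u)⁻¹ • u with hv
    have hvi : v ∉ interior Q := by
      rw [← gauge_lt_one_iff_mem_interior hQc hQ0, hQr u hu]; simp
    obtain ⟨f, hf⟩ := geometric_hahn_banach_open_point hQc.interior isOpen_interior hvi
    have h0i : (0 : vectorSpan ℝ P) ∈ interior Q := mem_interior_iff_mem_nhds.2 hQ0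
    have hfle : ∀ w ∈ Q, f w ≤ f v := by
      have hcl := hQc.closure_interior_eq_closure_of_nonempty_interior ⟨0, h0i⟩
      have : closure (interior Q) ⊆ {w | f w ≤ f v} :=
        closure_minimal (fun w hw => (hf w hw).le) (isClosed_le f.continuous continuous_const)
      intro w hw
      exact this (by rw [hcl]; exact subset_closure hw)
    obtain ⟨g, hg, -⟩ := exists_extension_norm_eq _ f
    have hv' : o + (gauge Q u)⁻¹ • (u : EE N) = o + (v : EE N) := rfl
    refine ⟨{x ∈ P | ∀ y ∈ P, g y ≤ g x}, fun _ => ⟨g, rfl⟩, ?_, ?_⟩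
    · rintro ⟨-, h⟩
      have := h (o + (v : EE N)) (hQm u hu)
      rw [map_add, hg] at this
      have h2 := hf 0 h0i
      simp at h2
      linarith
    · dsimp only
      rw [hv']
      refine ⟨hQm u hu, fun y hy => ?_⟩
      have hw : (⟨y - o, vsub_mem_vectorSpan ℝ hy hoP⟩ : vectorSpan ℝ P) ∈ Q := by
        simp [hQ, hy]
      have := hfle _ hw
      rw [← hg, ← hg] at this
      simp at this ⊢
      linarith
  · intro u hu
    refine ⟨gauge Q u, ?_⟩
    rw [add_sub_cancel_left, smul_smul, mul_inv_cancel₀ (hgpos u hu).ne', one_smul]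
  · intro F hF hoF u huF
    have hu0 : u ≠ 0 := by
      rintro rfl
      simp at huF; exact hoF huF
    have hle : gauge Q u ≤ 1 := gauge_le_one_of_mem (hF.subset huF)
    have hge : 1 ≤ gauge Q u := by
      by_contra! hlt
      obtain ⟨l, hl⟩ := hF ⟨_, huF⟩
      have hlu : 0 < l u := by
        by_contra! hlu
        apply hoF
        rw [hl] at huF ⊢
        refine ⟨hoP, fun y hy => (huF.2 y hy).trans ?_⟩
        simp; linarith
      rw [hl] at huF
      have h1 := huF.2 _ (hQm u hu0)
      simp at h1
      have h2 := one_lt_inv₀ (hgpos u hu0) |>.2 hlt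
      nlinarith
    have : gauge Q u = 1 := le_antisymm hle hge
    simp [this]

lemma sdim_empty {N : ℕ} : sdim (∅ : Set (EE N)) = 0 := by
  rw [sdim_eq, vectorSpan_empty]
  exact finrank_bot ℝ _

/-- The linear span (in the direction space of `P`) of the cone over `A` with apex `o`. -/
noncomputable def coneSpan {N : ℕ} (P : Set (EE N)) (o : EE N) (A : Set (EE N)) :
    Submodule ℝ (vectorSpan ℝ P) :=
  (vectorSpan ℝ (insert o A)).comap (vectorSpan ℝ P).subtype

lemma coneSpan_finrank {N : ℕ} {P A : Set (EE N)} {o : EE N} (ho : o ∈ P) (hA : A ⊆ P) :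
    Module.finrank ℝ (coneSpan P o A) ≤ sdim A + 1 := by
  have hle : vectorSpan ℝ (insert o A) ≤ vectorSpan ℝ P :=
    vectorSpan_mono ℝ (insert_subset ho hA)
  have := (Submodule.comapSubtypeEquivOfLe hle).finrank_eq
  rw [coneSpan, this, sdim_eq]
  exact finrank_vectorSpan_insert_le_set ℝ A o

lemma mem_coneSpan {N : ℕ} {P A : Set (EE N)} {o x : EE N} {g : ℝ} {u : vectorSpan ℝ P}
    (hu : (u : EE N) = g • (x - o)) (hx : x ∈ A) : u ∈ coneSpan P o A := by
  change (u : EE N) ∈ vectorSpan ℝ (insert o A)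
  rw [hu]
  exact Submodule.smul_mem _ _ (vsub_mem_vectorSpan ℝ (mem_insert_of_mem _ hx) (mem_insert _ _))

lemma exists_facet {N : ℕ} {P : Set (EE N)} (hP : IsPolytope P) {d : ℕ}
    (hd : sdim P = d + 1) : ∃ A, IsFaceDim P A d := by
  have hne : P.Nonempty := by
    rw [nonempty_iff_ne_empty]
    rintro rfl
    have h0 : sdim (∅ : Set (EE N)) = 0 := sdim_empty
    omega
  obtain ⟨o, ho, ρ, -, -, h3, h4, -⟩ := ray hP hne
  have : Finite {A | IsExposed ℝ P A ∧ o ∉ A ∧ A.Nonempty} :=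
    (faces_finite hP).subset (fun A hA => hA.1)
  have hne2 : ∃ u : vectorSpan ℝ P, u ≠ 0 := by
    rw [sdim_eq] at hd
    have : Nontrivial (vectorSpan ℝ P) := Module.nontrivial_of_finrank_pos (R := ℝ) (by omega)
    exact exists_ne 0
  have hcov : ⋃ A : {A | IsExposed ℝ P A ∧ o ∉ A ∧ A.Nonempty},
      (coneSpan P o A.1 : Set (vectorSpan ℝ P)) = univ := by
    rw [eq_univ_iff_forall]
    have key : ∀ u : vectorSpan ℝ P, u ≠ 0 → u ∈ ⋃ A : {A | IsExposed ℝ P A ∧ o ∉ A ∧ A.Nonempty},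
      (coneSpan P o A.1 : Set (vectorSpan ℝ P)) := by
      intro u hu
      obtain ⟨A, hA, hoA, hρ⟩ := h3 u hu
      obtain ⟨g, hg⟩ := h4 u hu
      exact mem_iUnion.2 ⟨⟨A, hA, hoA, _, hρ⟩, mem_coneSpan hg hρ⟩
    intro u
    by_cases hu : u = 0
    · obtain ⟨v, hv⟩ := hne2
      obtain ⟨A, -⟩ := mem_iUnion.1 (key v hv)
      rw [hu]
      exact mem_iUnion.2 ⟨A, Submodule.zero_mem _⟩
    · exact key u hu
  obtain ⟨⟨A, hA, hoA, hAne⟩, htop⟩ := Subspace.exists_eq_top_of_iUnion_eq_univ hcov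
  have h := coneSpan_finrank ho hA.subset
  simp only at htop
  rw [htop, finrank_top, ← sdim_eq, hd] at h
  have h2 := face_lt hA hAne (fun h => hoA (h ▸ ho))
  exact ⟨A, hA, hAne, by omega⟩

lemma exists_face {N : ℕ} (k m : ℕ) : ∀ {P : Set (EE N)}, IsPolytope P → P.Nonempty →
    sdim P = k + m → ∃ A, IsFaceDim P A k := by
  induction m with
  | zero => intro P hP hne hd; exact ⟨P, IsExposed.refl P, hne, hd⟩
  | succ m ih =>
    intro P hP hne hd
    obtain ⟨A, hA, hAne, hAd⟩ := exists_facet hP (d := k + m) hd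
    obtain ⟨B, hB, hBne, hBd⟩ := ih (face_poly hP hA) hAne hAd
    exact ⟨B, face_trans hP hA hB, hBne, hBd⟩

lemma generic {V : Type*} [AddCommGroup V] [Module ℝ V] [FiniteDimensional ℝ V]
    {ι : Type*} [Finite ι] (W : ι → Submodule ℝ V)
    (hW : ∀ i, Module.finrank ℝ (W i) + 2 ≤ Module.finrank ℝ V) (a b : V) :
    ∃ c, ∀ i, c ∉ W i ⊔ Submodule.span ℝ {a} ∧ c ∉ W i ⊔ Submodule.span ℝ {b} := by
  by_contra! h
  have hlt : ∀ i x, W i ⊔ Submodule.span ℝ {x} ≠ ⊤ := by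
    intro i x htop
    have h1 := Submodule.finrank_add_le_finrank_add_finrank (W i) (Submodule.span ℝ {x})
    rw [htop, finrank_top] at h1
    have h2 : Module.finrank ℝ (Submodule.span ℝ {x}) ≤ 1 := by
      simpa using finrank_span_le_card (R := ℝ) ({x} : Set V)
    have := hW i
    omega
  have hcov : ⋃ j : ι × Bool,
      ((W j.1 ⊔ Submodule.span ℝ {if j.2 then a else b} : Submodule ℝ V) : Set V) = univ := by
    rw [eq_univ_iff_forall]
    intro c
    obtain ⟨i, hi⟩ := h c
    by_cases hc : c ∈ W i ⊔ Submodule.span ℝ {a}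
    · exact mem_iUnion.2 ⟨(i, true), by simpa using hc⟩
    · exact mem_iUnion.2 ⟨(i, false), by simpa using hi hc⟩
  obtain ⟨j, hj⟩ := Subspace.exists_eq_top_of_iUnion_eq_univ hcov
  exact hlt _ _ hj

lemma segment_generic {V : Type*} [AddCommGroup V] [Module ℝ V] {W : Submodule ℝ V} {a c u : V}
    (hc : c ∉ W ⊔ Submodule.span ℝ {a}) (hu : u ∈ segment ℝ a c) (hua : u ≠ a) : u ∉ W := by
  intro huW
  obtain ⟨s, t, hs, ht, hst, rfl⟩ := hu
  have ht0 : t ≠ 0 := by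
    rintro rfl
    apply hua
    rw [add_zero] at hst
    simp [hst]
  apply hc
  have : c = t⁻¹ • (s • a + t • c) + (-(t⁻¹ * s)) • a := by
    rw [smul_add, smul_smul, smul_smul, inv_mul_cancel₀ ht0]
    module
  rw [this]
  exact Submodule.add_mem_sup (Submodule.smul_mem _ _ huW)
    (Submodule.smul_mem _ _ (Submodule.mem_span_singleton_self a))

lemma reach_lift {N : ℕ} {P A : Set (EE N)} {k : ℕ} (hP : IsPolytope P) (hA : IsExposed ℝ P A)
    (hconn : (faceGraph A k).Preconnected) (F F' : {F // IsFaceDim P F k})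
    (hF : F.1 ⊆ A) (hF' : F'.1 ⊆ A) : (faceGraph P k).Reachable F F' := by
  let φ : faceGraph A k →g faceGraph P k :=
    { toFun := fun G => ⟨G.1, face_trans hP hA G.2.1, G.2.2⟩
      map_rel' := by
        rintro ⟨G, hG⟩ ⟨G', hG'⟩ h
        simp only [faceGraph, SimpleGraph.fromRel_adj] at h ⊢
        refine ⟨fun h' => h.1 (Subtype.ext (Subtype.mk.inj h')), ?_⟩
        rcases h.2 with ⟨H, hH, h1, h2⟩ | ⟨H, hH, h1, h2⟩
        · exact Or.inl ⟨H, ⟨face_trans hP hA hH.1, hH.2⟩, h1, h2⟩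
        · exact Or.inr ⟨H, ⟨face_trans hP hA hH.1, hH.2⟩, h1, h2⟩ }
  exact (hconn ⟨F.1, F.2.1.mono hA.subset hF, F.2.2⟩
    ⟨F'.1, F'.2.1.mono hA.subset hF', F'.2.2⟩).map φ

lemma main_pre {N : ℕ} (k : ℕ) (d : ℕ) : ∀ (P : Set (EE N)), IsPolytope P → sdim P = d → k ≤ d →
    (faceGraph P k).Preconnected := by
  induction d using Nat.strong_induction_on with
  | _ d ih =>
  intro P hP hd hk F F'
  have hne : P.Nonempty := F.2.2.1.mono F.2.1.subset
  by_cases hFF : F = F'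
  · rw [hFF]
  rcases (show k = d ∨ k + 1 = d ∨ k + 2 ≤ d by omega) with h | h | h
  · exfalso
    apply hFF
    have : ∀ G : {F // IsFaceDim P F k}, G.1 = P := by
      intro G
      by_contra hG
      have := face_lt G.2.1 G.2.2.1 hG
      rw [G.2.2.2] at this
      omega
    exact Subtype.ext ((this F).trans (this F').symm)
  · apply SimpleGraph.Adj.reachable
    simp only [faceGraph, SimpleGraph.fromRel_adj]
    exact ⟨hFF, Or.inl ⟨P, ⟨IsExposed.refl P, hne, by omega⟩, F.2.1.subset, F'.2.1.subset⟩⟩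
  obtain ⟨o, ho, ρ, h1, h2, h3, h4, h5⟩ := ray hP hne
  have hoF : ∀ G : {F // IsFaceDim P F k}, o ∉ G.1 := by
    intro G hoG
    have := h2 _ G.2.1 hoG
    have h' := G.2.2.2
    rw [this] at h'
    omega
  -- centers of the faces
  have hcen : ∀ G : {F // IsFaceDim P F k}, ∃ u : vectorSpan ℝ P, u ≠ 0 ∧ ρ u ∈ G.1 ∧
      ∀ A, IsExposed ℝ P A → ρ u ∈ A → G.1 ⊆ A := by
    intro G
    obtain ⟨x, hx, hxA⟩ := center hP G.2.1 G.2.2.1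
    let u : vectorSpan ℝ P := ⟨x - o, vsub_mem_vectorSpan ℝ (G.2.1.subset hx) ho⟩
    have hxu : o + (u : EE N) = x := by simp [u]
    have hρ := h5 G.1 G.2.1 (hoF G) u (by rw [hxu]; exact hx)
    rw [hxu] at hρ
    refine ⟨u, ?_, by rw [hρ]; exact hx, by rw [hρ]; exact hxA⟩
    intro hu
    rw [hu] at hxu
    simp at hxu
    exact hoF G (hxu ▸ hx)
  obtain ⟨a, ha0, haF, haA⟩ := hcen F
  obtain ⟨b, hb0, hbF, hbA⟩ := hcen F'
  -- small faces
  have : Finite {A | IsExposed ℝ P A ∧ sdim A < k} :=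
    (faces_finite hP).subset (fun A hA => hA.1)
  obtain ⟨c, hc⟩ := generic (V := vectorSpan ℝ P)
    (fun i : Option {A | IsExposed ℝ P A ∧ sdim A < k} =>
      i.elim ⊥ (fun A => coneSpan P o A.1)) (by
      rw [← sdim_eq, hd]
      rintro (_ | ⟨A, hA, hAk⟩)
      · have : Module.finrank ℝ (⊥ : Submodule ℝ (vectorSpan ℝ P)) ≤ 0 := (finrank_bot ℝ _).le
        exact (Nat.add_le_add_right this 2).trans (by omega)
      · have := coneSpan_finrank ho hA.subset
        exact (Nat.add_le_add_right this 2).trans (by omega)) a b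
  have hgood : ∀ (G : {F // IsFaceDim P F k}) (e : vectorSpan ℝ P), e ≠ 0 →
      (∀ A, IsExposed ℝ P A → ρ e ∈ A → G.1 ⊆ A) →
      (∀ i : Option {A | IsExposed ℝ P A ∧ sdim A < k},
        c ∉ (i.elim ⊥ (fun A => coneSpan P o A.1) : Submodule ℝ (vectorSpan ℝ P)) ⊔
          Submodule.span ℝ {e}) →
      ∀ u ∈ segment ℝ e c, u ≠ 0 ∧ ∀ A, IsExposed ℝ P A → ρ u ∈ A → k ≤ sdim A := by
    intro G e he0 heA hce u hu
    by_cases hue : u = e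
    · subst hue
      refine ⟨he0, fun A hA hρ => ?_⟩
      have hs := heA A hA hρ
      have h' := G.2.2.2
      rw [← h', sdim_eq, sdim_eq]
      exact Submodule.finrank_mono (vectorSpan_mono ℝ hs)
    · have hu0 : u ≠ 0 := by
        have := segment_generic (hce none) hu hue
        simpa using this
      refine ⟨hu0, fun A hA hρ => ?_⟩
      by_contra! hlt
      obtain ⟨g, hg⟩ := h4 u hu0
      exact segment_generic (hce (some ⟨A, hA, hlt⟩)) hu hue (mem_coneSpan hg hρ)
  set Y := segment ℝ a c ∪ segment ℝ c b with hY
  have hYg : ∀ u ∈ Y, u ≠ 0 ∧ ∀ A, IsExposed ℝ P A → ρ u ∈ A → k ≤ sdim A := by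
    rintro u (hu | hu)
    · exact hgood F a ha0 haA (fun i => (hc i).1) u hu
    · rw [segment_symm] at hu
      exact hgood F' b hb0 hbA (fun i => (hc i).2) u hu
  have hYc : IsPreconnected Y :=
    IsPreconnected.union c (right_mem_segment ℝ a c) (left_mem_segment ℝ c b)
      (convex_segment a c).isPreconnected (convex_segment c b).isPreconnected
  have hXc : IsPreconnected (ρ '' Y) := hYc.image ρ (h1.mono fun u hu => (hYg u hu).1)
  -- faces not containing `o` are connected
  have hconn : ∀ A, IsExposed ℝ P A → A.Nonempty → o ∉ A → k ≤ sdim A →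
      (faceGraph A k).Preconnected := by
    intro A hA hAne hoA hkA
    have hlt := face_lt hA hAne (fun h => hoA (h ▸ ho))
    exact ih (sdim A) (by omega) A (face_poly hP hA) rfl hkA
  let Rch : Set (EE N) → Prop := fun A => ∃ G : {F // IsFaceDim P F k}, G.1 ⊆ A ∧
    (faceGraph P k).Reachable F G
  let C1 : Set (Set (EE N)) := {A | IsExposed ℝ P A ∧ o ∉ A ∧ Rch A}
  let C2 : Set (Set (EE N)) := {A | IsExposed ℝ P A ∧ o ∉ A ∧ ¬ Rch A}
  have hcl : ∀ C : Set (Set (EE N)), (∀ A ∈ C, IsExposed ℝ P A) → IsClosed (⋃ A ∈ C, A) := by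
    intro C hC
    exact ((faces_finite hP).subset hC).isClosed_biUnion
      (fun A hA => (hC A hA).isClosed (poly_compact hP).isClosed)
  have haY : a ∈ Y := Or.inl (left_mem_segment ℝ a c)
  have hbY : b ∈ Y := Or.inr (right_mem_segment ℝ c b)
  have hcover : ρ '' Y ⊆ (⋃ A ∈ C1, A) ∪ (⋃ A ∈ C2, A) := by
    rintro _ ⟨u, hu, rfl⟩
    obtain ⟨A, hA, hoA, hρ⟩ := h3 u (hYg u hu).1
    by_cases hR : Rch A
    · exact Or.inl (mem_biUnion (show A ∈ C1 from ⟨hA, hoA, hR⟩) hρ)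
    · exact Or.inr (mem_biUnion (show A ∈ C2 from ⟨hA, hoA, hR⟩) hρ)
  by_contra hcon
  have hFR : F'.1 ∈ C2 := by
    refine ⟨F'.2.1, hoF F', ?_⟩
    rintro ⟨G, hG, hGr⟩
    exact hcon (hGr.trans (reach_lift hP F'.2.1
      (hconn F'.1 F'.2.1 F'.2.2.1 (hoF F') F'.2.2.2.ge) G F' hG subset_rfl))
  obtain ⟨x, ⟨u, hu, rfl⟩, hx1, hx2⟩ := isPreconnected_closed_iff.1 hXc _ _
    (hcl C1 fun A hA => hA.1) (hcl C2 fun A hA => hA.1) hcover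
    ⟨ρ a, mem_image_of_mem ρ haY, mem_biUnion
      (show F.1 ∈ C1 from ⟨F.2.1, hoF F, F, subset_rfl, SimpleGraph.Reachable.refl F⟩) haF⟩
    ⟨ρ b, mem_image_of_mem ρ hbY, mem_biUnion hFR hbF⟩
  obtain ⟨A, ⟨hA, hoA, G, hGA, hGr⟩, hρA⟩ := mem_iUnion₂.1 hx1
  obtain ⟨B, ⟨hB, hoB, hBr⟩, hρB⟩ := mem_iUnion₂.1 hx2
  have hAB : IsExposed ℝ P (A ∩ B) := hA.inter hB
  have hABk := (hYg u hu).2 _ hAB ⟨hρA, hρB⟩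
  obtain ⟨G', hG', hG'2⟩ := exists_face k (sdim (A ∩ B) - k) (face_poly hP hAB) ⟨_, hρA, hρB⟩
    (by omega)
  have hG'P : IsFaceDim P G' k := ⟨face_trans hP hAB hG', hG'2⟩
  apply hBr
  refine ⟨⟨G', hG'P⟩, hG'.subset.trans inter_subset_right, hGr.trans ?_⟩
  exact reach_lift hP hA (hconn A hA ⟨_, hρA⟩ hoA ((hYg u hu).2 A hA hρA)) _ _ hGA
    (hG'.subset.trans inter_subset_left)

/-- For every `d`-dimensional convex polytope `P` and every `0 ≤ k ≤ d-1`, the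
graph `G_k(P)` is connected. -/
theorem stmt_16 (d k : ℕ) (hk : k < d) {N : ℕ}
    (P : Set (EuclideanSpace ℝ (Fin N))) (hP : IsPolytope P) (hdim : sdim P = d) :
    (faceGraph P k).Connected := by
  have hne : P.Nonempty := by
    rw [nonempty_iff_ne_empty]
    rintro rfl
    have h0 : sdim (∅ : Set (EE N)) = 0 := sdim_empty
    omega
  obtain ⟨A, hA⟩ := exists_face k (d - k) hP hne (by omega)
  have : Nonempty {F : Set (EuclideanSpace ℝ (Fin N)) // IsFaceDim P F k} := ⟨⟨A, hA⟩⟩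
  exact ⟨main_pre k d P hP hdim hk.le⟩
end
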